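/- Let g be a Lie algebra over a field of characteristic zero and h ⊂ g a finite-dimensional subalgebra admitting an ad(h)-invariant complement V (g = h ⊕ V as h-modules). Then H^m(W(g,h)) = 0 for all odd m, and for each j ≥ 0 the restriction map W^{0,j}(g,h) = (S^j g)^{*h} → (S^j h)^{*h} induces an isomorphism H^{2j}(W(g,h)) ≅ (S^j h)^{*h}. -/

import Mathlib

noncomputable section

section Weil

variable (F : Type*) [Field F] (g : Type*) [LieRing g] [LieAlgebra F g]

/-- The tuple `(br, v_0, …, v̂_i, …, v̂_j, …, v_d)` (`i < j`) used in the
Chevalley–Eilenberg differential. -/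
def pairTupleW {G : Type*} (d : ℕ) (v : Fin (d+1) → G) (br : G) (i j : Fin (d+1)) :
    Fin d → G :=
  fun m =>
    if hm : m.1 = 0 then br
    else if h1 : m.1 - 1 < i.1 then v ⟨m.1 - 1, by have := i.2; omega⟩
    else if h2 : m.1 < j.1 then v ⟨m.1, by have := j.2; omega⟩
    else v ⟨m.1 + 1, by have := m.2; omega⟩

/-- The (relative) Chevalley–Eilenberg differential `d_Lie` on cochains with values in
`(S^j g)^*` (coadjoint action extended to the symmetric power). -/
def dLieS (k j : ℕ) (c : (Fin k → g) → (Fin j → g) → F) :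
    (Fin (k+1) → g) → (Fin j → g) → F :=
  fun v w =>
    (∑ i : Fin (k+1), (-1:F)^(i.1+1) *
      ∑ r : Fin j, c (v ∘ i.succAbove) (Function.update w r ⁅v i, w r⁆))
    + ∑ i : Fin (k+1), ∑ l : Fin (k+1),
        (if i < l then (-1:F)^(i.1+l.1) * c (pairTupleW k v ⁅v i, v l⁆ i l) w else 0)

/-- The Koszul piece `d'` of the Weil differential:
`d'c(v ⊗ w_1⋯w_{j+1}) = ∑_k c(π(w_k)∧v ⊗ w_1⋯ŵ_k⋯w_{j+1})`. -/
def dKoszul (i j : ℕ) (c : (Fin (i+1) → g) → (Fin j → g) → F) :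
    (Fin i → g) → (Fin (j+1) → g) → F :=
  fun v w => ∑ r : Fin (j+1), c (Fin.cons (w r) v) (w ∘ r.succAbove)

variable (h : LieSubalgebra F g)

/-- An element of `W^{i,j}(g,h) = (Λ^i(g/h)⊗S^j g)^{*h}`: a functional, multilinear and
alternating in the first block, multilinear and symmetric in the second block, vanishing
whenever a first-block argument lies in `h`, and `h`-invariant. -/
def IsWCochain (i j : ℕ) (c : (Fin i → g) → (Fin j → g) → F) : Prop :=
  (∀ (v : Fin i → g) (t : Fin i) (x y : g) (w : Fin j → g),
      c (Function.update v t (x + y)) w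
        = c (Function.update v t x) w + c (Function.update v t y) w) ∧
  (∀ (v : Fin i → g) (t : Fin i) (s : F) (x : g) (w : Fin j → g),
      c (Function.update v t (s • x)) w = s * c (Function.update v t x) w) ∧
  (∀ (v : Fin i → g) (t t' : Fin i) (w : Fin j → g), t ≠ t' → v t = v t' → c v w = 0) ∧
  (∀ (v : Fin i → g) (w : Fin j → g) (r : Fin j) (x y : g),
      c v (Function.update w r (x + y))
        = c v (Function.update w r x) + c v (Function.update w r y)) ∧
  (∀ (v : Fin i → g) (w : Fin j → g) (r : Fin j) (s : F) (x : g),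
      c v (Function.update w r (s • x)) = s * c v (Function.update w r x)) ∧
  (∀ (v : Fin i → g) (w : Fin j → g) (ρ : Equiv.Perm (Fin j)), c v (w ∘ ρ) = c v w) ∧
  (∀ (v : Fin i → g) (t : Fin i) (w : Fin j → g), v t ∈ h → c v w = 0) ∧
  (∀ X ∈ h, ∀ (v : Fin i → g) (w : Fin j → g),
      (∑ t : Fin i, c (Function.update v t ⁅X, v t⁆) w)
        + (∑ r : Fin j, c v (Function.update w r ⁅X, w r⁆)) = 0)

/-- An element of the relative Weil algebra `W(g,h)` of total degree `m`, presented by its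
components `W i j ∈ W^{i,j}(g,h)` (`i + 2j = m`, the other components being zero). -/
def IsWElt (m : ℕ) (W : ∀ i j : ℕ, (Fin i → g) → (Fin j → g) → F) : Prop :=
  (∀ i j, IsWCochain F g h i j (W i j)) ∧ (∀ i j, i + 2*j ≠ m → W i j = 0)

/-- The Weil differential `d = d_Lie + d'`. -/
def dWeil (W : ∀ i j : ℕ, (Fin i → g) → (Fin j → g) → F) :
    ∀ i j : ℕ, (Fin i → g) → (Fin j → g) → F :=
  fun i j =>
    (match i with
     | 0 => 0
     | (i'+1) => dLieS F g i' j (W i' j)) +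
    (match j with
     | 0 => 0
     | (j'+1) => dKoszul F g i j' (W (i+1) j'))

/-- `W` is a coboundary in the relative Weil algebra (in total degree `m`). -/
def IsWCobd : (m : ℕ) → (∀ i j : ℕ, (Fin i → g) → (Fin j → g) → F) → Prop
  | 0, W => ∀ i j, W i j = 0
  | (m'+1), W => ∃ W', IsWElt F g h m' W' ∧ dWeil F g W' = W

/-- An (extension to `g` of an) invariant polynomial `Q ∈ (S^j h)^{*h}`: a symmetric
multilinear form, `ad h`-invariant on `h`-tuples. -/
def IsSymPoly (j : ℕ) (Q : (Fin j → g) → F) : Prop :=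
  (∀ (w : Fin j → g) (r : Fin j) (x y : g),
      Q (Function.update w r (x + y))
        = Q (Function.update w r x) + Q (Function.update w r y)) ∧
  (∀ (w : Fin j → g) (r : Fin j) (s : F) (x : g),
      Q (Function.update w r (s • x)) = s * Q (Function.update w r x)) ∧
  (∀ (w : Fin j → g) (ρ : Equiv.Perm (Fin j)), Q (w ∘ ρ) = Q w) ∧
  (∀ X ∈ h, ∀ w : Fin j → g, (∀ r, w r ∈ h) →
      ∑ r : Fin j, Q (Function.update w r ⁅X, w r⁆) = 0)

end Weil

/-!
Let `p` be the projection of `g` onto the invariant complement `V` along `h`, and let `s` be the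
Koszul homotopy moving one exterior argument, after applying `p`, to the symmetric block. Then
`d' s + s d'` is the derivation induced by `p`. On functionals that vanish when an exterior argument
lies in `h` this derivation is diagonalizable, its weight being `i` plus the number of symmetric
arguments taken from `V`, so its zero weight space is exactly `(S h)^*`. As `d_Lie s + s d_Lie`
lowers the symmetric degree, `d s` agrees on cocycles with that derivation up to lower filtration
order, and is therefore invertible, in characteristic zero, on the cocycles restricting to zero on
`h`. Each of these is thus a coboundary, of a cochain `s z`, which has no component of exterior
degree zero. So to represent an invariant polynomial on `h` by a cocycle, extend it to `g` by the
projection onto `h` and subtract `s z`, where `d s z` is the differential of this extension.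
-/

/-- A family of functionals `W i j` of `i` exterior and `j` symmetric arguments, without any
linearity requirement: the ambient module in which the operators of the Weil algebra are defined
before being restricted to the multilinear, alternating and symmetric families. -/
abbrev WeilFamily (F g : Type*) : Type _ :=
  ∀ i j : ℕ, (Fin i → g) → (Fin j → g) → F

namespace WeilFamily

open Module

variable {F : Type*} [Field F]

section Contraction

variable {g : Type*}

/-- The contraction `ι x`, inserting `x` as first exterior argument. -/
def ι (x : g) : End F (WeilFamily F g) where
  toFun W := fun i j v w => W (i + 1) j (Fin.cons x v) w
  map_add' _ _ := rfl
  map_smul' _ _ := rfl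

/-- The contraction `κ x`, inserting `x` as first symmetric argument. -/
def κ (x : g) : End F (WeilFamily F g) where
  toFun W := fun i j v w => W i (j + 1) v (Fin.cons x w)
  map_add' _ _ := rfl
  map_smul' _ _ := rfl

/-- The Koszul part `d'` of the Weil differential. -/
def dKos : End F (WeilFamily F g) where
  toFun W := fun
    | _, 0 => 0
    | i, j + 1 => dKoszul F g i j (W (i + 1) j)
  map_add' W W' := by
    funext i j v w
    cases j with
    | zero => simp
    | succ j => simp only [dKoszul, Pi.add_apply, Finset.sum_add_distrib]
  map_smul' s W := by
    funext i j v w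
    cases j with
    | zero => simp
    | succ j => simp only [dKoszul, Pi.smul_apply, smul_eq_mul, RingHom.id_apply, Finset.mul_sum]

@[simp] theorem dKos_zero_right (W : WeilFamily F g) (i : ℕ) : dKos W i 0 = 0 := rfl

theorem apply_succ_left (W : WeilFamily F g) (i j : ℕ) (v : Fin (i + 1) → g) (w : Fin j → g) :
    W (i + 1) j v w = ι (v 0) W i j (Fin.tail v) w :=
  congrArg (W (i + 1) j · w) (Fin.cons_self_tail v).symm

theorem apply_succ_right (W : WeilFamily F g) (i j : ℕ) (v : Fin i → g) (w : Fin (j + 1) → g) :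
    W i (j + 1) v w = κ (w 0) W i j v (Fin.tail w) :=
  congrArg (W i (j + 1) v ·) (Fin.cons_self_tail w).symm

theorem cons_comp_succAbove_zero {n : ℕ} (x : g) (v : Fin n → g) :
    (Fin.cons x v : Fin (n + 1) → g) ∘ (0 : Fin (n + 1)).succAbove = v := by
  funext t
  simp

theorem cons_comp_succAbove_succ {n : ℕ} (x : g) (v : Fin (n + 1) → g) (k : Fin (n + 1)) :
    (Fin.cons x v : Fin (n + 2) → g) ∘ k.succ.succAbove = Fin.cons x (v ∘ k.succAbove) := by
  funext t
  cases t using Fin.cases <;> simp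

theorem cons_comp_perm {n : ℕ} (x : g) (v : Fin n → g) (σ : Equiv.Perm (Fin n)) :
    (Fin.cons x (v ∘ σ) : Fin (n + 1) → g) =
      Fin.cons x v ∘ Equiv.Perm.decomposeFin.symm (0, σ) := by
  funext t
  cases t using Fin.cases <;> simp

variable (x : g) (W : WeilFamily F g)

@[simp] theorem ι_apply (i j : ℕ) (v : Fin i → g) (w : Fin j → g) :
    ι x W i j v w = W (i + 1) j (Fin.cons x v) w := rfl

@[simp] theorem κ_apply (i j : ℕ) (v : Fin i → g) (w : Fin j → g) :
    κ x W i j v w = W i (j + 1) v (Fin.cons x w) := rfl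

theorem ι_κ (y : g) : ι x (κ y W) = κ y (ι x W) := rfl

theorem κ_dKos : κ x (dKos W) = dKos (κ x W) + ι x W := by
  funext i j v w
  cases j with
  | zero => simp [κ, ι, dKos, dKoszul]
  | succ j =>
    simp only [κ, ι, dKos, dKoszul, LinearMap.coe_mk, AddHom.coe_mk, Pi.add_apply]
    rw [Fin.sum_univ_succ, add_comm]
    simp only [Fin.cons_zero, Fin.cons_succ, cons_comp_succAbove_zero, cons_comp_succAbove_succ]

end Contraction

section Linear

variable {g : Type*} [AddCommGroup g] [Module F g]

/-- The derivation `der φ` induced by an endomorphism `φ` of `g`: the sum over all arguments, of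
both kinds, of the functional with `φ` applied to that argument. -/
def der (φ : End F g) : End F (WeilFamily F g) where
  toFun W := fun i j v w =>
    (∑ t, W i j (Function.update v t (φ (v t))) w) + ∑ r, W i j v (Function.update w r (φ (w r)))
  map_add' W W' := by
    funext i j v w
    simp only [Pi.add_apply, Finset.sum_add_distrib]
    ring
  map_smul' s W := by
    funext i j v w
    simp only [Pi.smul_apply, smul_eq_mul, RingHom.id_apply, Finset.mul_sum, mul_add]

/-- The Koszul homotopy of an endomorphism `p` of `g`: it moves each exterior argument in turn,
after applying `p`, to the symmetric block. -/
def koszulHomotopy (p : End F g) : End F (WeilFamily F g) where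
  toFun W := fun
    | 0, _ => 0
    | i + 1, j => fun v w =>
        ∑ k : Fin (i + 1), (-1) ^ (k : ℕ) * W i (j + 1) (v ∘ k.succAbove) (Fin.cons (p (v k)) w)
  map_add' W W' := by
    funext i j v w
    cases i with
    | zero => simp
    | succ i => simp only [Pi.add_apply, mul_add, Finset.sum_add_distrib]
  map_smul' s W := by
    funext i j v w
    cases i with
    | zero => simp
    | succ i =>
      simp only [Pi.smul_apply, smul_eq_mul, RingHom.id_apply, Finset.mul_sum, mul_left_comm s]

@[simp] theorem koszulHomotopy_zero_left (p : End F g) (W : WeilFamily F g) (j : ℕ) :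
    koszulHomotopy p W 0 j = 0 := rfl

@[simp] theorem der_zero_zero (φ : End F g) (W : WeilFamily F g) : der φ W 0 0 = 0 := by
  funext v w
  simp [der]

variable (φ : End F g) (x : g) (W : WeilFamily F g)

theorem ι_der : ι x (der φ W) = der φ (ι x W) + ι (φ x) W := by
  funext i j v w
  simp only [ι, der, LinearMap.coe_mk, AddHom.coe_mk, Pi.add_apply, Fin.sum_univ_succ,
    Fin.cons_zero, Fin.cons_succ, Fin.update_cons_zero, Fin.cons_update]
  ring

theorem κ_der : κ x (der φ W) = der φ (κ x W) + κ (φ x) W := by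
  funext i j v w
  simp only [κ, der, LinearMap.coe_mk, AddHom.coe_mk, Pi.add_apply, Fin.sum_univ_succ,
    Fin.cons_zero, Fin.cons_succ, Fin.update_cons_zero, Fin.cons_update]
  ring

theorem ι_koszulHomotopy :
    ι x (koszulHomotopy φ W) = κ (φ x) W - koszulHomotopy φ (ι x W) := by
  funext i j v w
  cases i with
  | zero => simp [κ, ι, koszulHomotopy]
  | succ i =>
    simp only [κ, ι, koszulHomotopy, LinearMap.coe_mk, AddHom.coe_mk, Pi.sub_apply]
    rw [Fin.sum_univ_succ]
    simp only [Fin.cons_zero, Fin.cons_succ, cons_comp_succAbove_zero, cons_comp_succAbove_succ,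
      Fin.val_zero, pow_zero, one_mul, Fin.val_succ, pow_succ, mul_neg_one, neg_mul,
      Finset.sum_neg_distrib, sub_eq_add_neg]

end Linear

section Lie

variable {g : Type*} [LieRing g]

/-- The Chevalley–Eilenberg part `d_Lie` of the Weil differential. -/
def dLie : End F (WeilFamily F g) where
  toFun W := fun
    | 0, _ => 0
    | i + 1, j => dLieS F g i j (W i j)
  map_add' W W' := by
    funext i j v w
    cases i with
    | zero => simp
    | succ i =>
      simp only [dLieS, Pi.add_apply, Finset.sum_add_distrib, mul_add, ite_add_zero]
      ring
  map_smul' s W := by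
    funext i j v w
    cases i with
    | zero => simp
    | succ i =>
      simp only [dLieS, Pi.smul_apply, smul_eq_mul, RingHom.id_apply, Finset.mul_sum, mul_add,
        mul_ite, mul_zero, mul_left_comm s]

@[simp] theorem dLie_zero_left (W : WeilFamily F g) (j : ℕ) : dLie W 0 j = 0 := rfl

/-- The Weil differential `dWeil` as a linear operator. -/
def weilD : End F (WeilFamily F g) := dLie + dKos

theorem weilD_apply (W : WeilFamily F g) : weilD W = dLie W + dKos W := rfl

theorem weilD_eq_dWeil (W : WeilFamily F g) : weilD W = dWeil F g W := by
  funext i j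
  cases i <;> cases j <;> rfl

theorem weilD_apply_zero_zero (W : WeilFamily F g) : weilD W 0 0 = 0 := by
  funext v w
  simp [weilD_apply]

variable [LieAlgebra F g]

/-- The Lie derivative along `x`, the coadjoint action of `x` on families. -/
def lieDer (x : g) : End F (WeilFamily F g) := -der (LieAlgebra.ad F g x)

theorem lieDer_apply (x : g) (W : WeilFamily F g) :
    lieDer x W = -der (LieAlgebra.ad F g x) W := rfl

variable (x : g) (W : WeilFamily F g)

theorem ι_lieDer (y : g) : ι y (lieDer x W) = lieDer x (ι y W) - ι ⁅x, y⁆ W := by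
  simp only [lieDer_apply, map_neg, ι_der, LieAlgebra.ad_apply]
  abel

theorem κ_lieDer (y : g) : κ y (lieDer x W) = lieDer x (κ y W) - κ ⁅x, y⁆ W := by
  simp only [lieDer_apply, map_neg, κ_der, LieAlgebra.ad_apply]
  abel

end Lie

section Cochains

variable {g : Type*} [AddCommGroup g] [Module F g]

/-- A functional of two blocks of arguments that is multilinear in each, alternating in the first
block and symmetric in the second, i.e. an element of `(Λ^i g ⊗ S^j g)^*`. -/
structure IsBiform {i j : ℕ} (c : (Fin i → g) → (Fin j → g) → F) : Prop where
  alternating : ∀ w, ∃ a : g [⋀^Fin i]→ₗ[F] F, ∀ v, a v = c v w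
  multilinear : ∀ v, ∃ s : MultilinearMap F (fun _ : Fin j ↦ g) F, ∀ w, s w = c v w
  symmetric : ∀ v w (σ : Equiv.Perm (Fin j)), c v (w ∘ σ) = c v w

theorem IsBiform.apply_update_left {i j : ℕ} {c : (Fin (i + 1) → g) → (Fin j → g) → F}
    (hc : IsBiform c) (v : Fin (i + 1) → g) (t : Fin (i + 1)) (x : g) (w : Fin j → g) :
    c (Function.update v t x) w = (-1) ^ (t : ℕ) * c (Fin.cons x (v ∘ t.succAbove)) w := by
  obtain ⟨a, ha⟩ := hc.alternating w
  have insert := a.map_insertNth t x (v ∘ t.succAbove)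
  rw [show t.insertNth x (v ∘ t.succAbove) = Function.update v t x from
    Fin.insertNth_removeNth t x v, ha, zsmul_eq_mul] at insert
  rw [insert, Matrix.vecCons, ha]
  push_cast
  rfl

theorem IsBiform.apply_update_right {i j : ℕ} {c : (Fin i → g) → (Fin (j + 1) → g) → F}
    (hc : IsBiform c) (v : Fin i → g) (w : Fin (j + 1) → g) (r : Fin (j + 1)) (x : g) :
    c v (Function.update w r x) = c v (Fin.cons x (w ∘ r.succAbove)) := by
  rw [← hc.symmetric v (Fin.cons x (w ∘ r.succAbove)) r.cycleRange]
  congr 1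
  funext t
  rcases eq_or_ne t r with rfl | h
  · simp
  · obtain ⟨s, rfl⟩ := Fin.exists_succAbove_eq h
    simp

theorem IsBiform.zero {i j : ℕ} :
    IsBiform (0 : (Fin i → g) → (Fin j → g) → F) where
  alternating _ := ⟨0, fun _ ↦ rfl⟩
  multilinear _ := ⟨0, fun _ ↦ rfl⟩
  symmetric _ _ _ := rfl

theorem IsBiform.add {i j : ℕ} {c c' : (Fin i → g) → (Fin j → g) → F} (hc : IsBiform c)
    (hc' : IsBiform c') : IsBiform (c + c') where
  alternating w := by
    obtain ⟨a, ha⟩ := hc.alternating w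
    obtain ⟨a', ha'⟩ := hc'.alternating w
    exact ⟨a + a', fun v ↦ congrArg₂ (· + ·) (ha v) (ha' v)⟩
  multilinear v := by
    obtain ⟨s, hs⟩ := hc.multilinear v
    obtain ⟨s', hs'⟩ := hc'.multilinear v
    exact ⟨s + s', fun w ↦ congrArg₂ (· + ·) (hs w) (hs' w)⟩
  symmetric v w σ := congrArg₂ (· + ·) (hc.symmetric v w σ) (hc'.symmetric v w σ)

theorem IsBiform.smul {i j : ℕ} {c : (Fin i → g) → (Fin j → g) → F} (b : F) (hc : IsBiform c) :
    IsBiform (b • c) where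
  alternating w := by
    obtain ⟨a, ha⟩ := hc.alternating w
    exact ⟨b • a, fun v ↦ congrArg (b • ·) (ha v)⟩
  multilinear v := by
    obtain ⟨s, hs⟩ := hc.multilinear v
    exact ⟨b • s, fun w ↦ congrArg (b • ·) (hs w)⟩
  symmetric v w σ := congrArg (b • ·) (hc.symmetric v w σ)

variable (F g) in
/-- The submodule `∏ (Λ^i g ⊗ S^j g)^*` of the module of all families. -/
def cochains : Submodule F (WeilFamily F g) where
  carrier := {W | ∀ i j, IsBiform (W i j)}
  zero_mem' _ _ := .zero
  add_mem' hW hW' i j := (hW i j).add (hW' i j)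
  smul_mem' c _ hW i j := (hW i j).smul c

variable {W : WeilFamily F g}

theorem ι_mem_cochains (hW : W ∈ cochains F g) (x : g) : ι x W ∈ cochains F g := by
  refine fun i j ↦ ⟨fun w ↦ ?_, fun v ↦ (hW (i + 1) j).multilinear (Fin.cons x v),
    fun v ↦ (hW (i + 1) j).symmetric (Fin.cons x v)⟩
  obtain ⟨a, ha⟩ := (hW (i + 1) j).alternating w
  exact ⟨a.curryLeft x, fun v ↦ ha (Fin.cons x v)⟩

theorem κ_mem_cochains (hW : W ∈ cochains F g) (x : g) : κ x W ∈ cochains F g := by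
  refine fun i j ↦ ⟨fun w ↦ (hW i (j + 1)).alternating (Fin.cons x w), fun v ↦ ?_,
    fun v w σ ↦ ?_⟩
  · obtain ⟨s, hs⟩ := (hW i (j + 1)).multilinear v
    exact ⟨s.curryLeft x, fun w ↦ hs (Fin.cons x w)⟩
  · rw [κ_apply, κ_apply, cons_comp_perm]
    exact (hW i (j + 1)).symmetric v _ _

theorem isLinearMap_ι (hW : W ∈ cochains F g) : IsLinearMap F fun x ↦ ι x W where
  map_add x y := by
    funext i j v w
    obtain ⟨a, ha⟩ := (hW (i + 1) j).alternating w
    simpa [ha] using a.toMultilinearMap.cons_add v x y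
  map_smul c x := by
    funext i j v w
    obtain ⟨a, ha⟩ := (hW (i + 1) j).alternating w
    simpa [ha] using a.toMultilinearMap.cons_smul v c x

theorem isLinearMap_κ (hW : W ∈ cochains F g) : IsLinearMap F fun x ↦ κ x W where
  map_add x y := by
    funext i j v w
    obtain ⟨s, hs⟩ := (hW i (j + 1)).multilinear v
    simpa [hs] using s.cons_add w x y
  map_smul c x := by
    funext i j v w
    obtain ⟨s, hs⟩ := (hW i (j + 1)).multilinear v
    simpa [hs] using s.cons_smul w c x

theorem ι_ι_self (hW : W ∈ cochains F g) (x : g) : ι x (ι x W) = 0 := by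
  funext i j v w
  obtain ⟨a, ha⟩ := (hW (i + 2) j).alternating w
  have vanish := a.map_eq_zero_of_eq (Fin.cons x (Fin.cons x v)) (i := 0) (j := 1) rfl zero_ne_one
  rwa [ha] at vanish

theorem ι_ι_comm (hW : W ∈ cochains F g) (x y : g) : ι x (ι y W) = -ι y (ι x W) := by
  have square := ι_ι_self hW (x + y)
  simp only [(isLinearMap_ι hW).map_add, map_add, (isLinearMap_ι (ι_mem_cochains hW _)).map_add,
    ι_ι_self hW, zero_add, add_zero] at square
  exact eq_neg_of_add_eq_zero_right square

theorem κ_κ_comm (hW : W ∈ cochains F g) (x y : g) : κ x (κ y W) = κ y (κ x W) := by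
  funext i j v w
  have insert := (hW i (j + 2)).apply_update_right v (Fin.cons y (Fin.cons x w)) (Fin.succ 0) x
  rw [cons_comp_succAbove_succ, cons_comp_succAbove_zero, ← Fin.cons_update,
    Fin.update_cons_zero] at insert
  exact insert

theorem ι_dKos (hW : W ∈ cochains F g) (x : g) : ι x (dKos W) = -dKos (ι x W) := by
  funext i j v w
  cases j with
  | zero => exact neg_zero.symm
  | succ j =>
    have swap (r : Fin (j + 1)) := congrFun₂ (congrFun₂ (ι_ι_comm hW x (w r)) i j) v
      (w ∘ r.succAbove)
    simpa [dKos, dKoszul] using (Finset.sum_congr rfl fun r _ ↦ (swap r).symm).symm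

end Cochains

section Criteria

/-! ### Detecting cochains and their identities by contractions -/

theorem apply_comp_perm_of_cons {α β : Type*} {n : ℕ} {f : (Fin (n + 1) → α) → β}
    (swap : ∀ w, f (w ∘ Equiv.swap 0 1) = f w)
    (tail : ∀ x w (σ : Equiv.Perm (Fin n)), f (Fin.cons x (w ∘ σ)) = f (Fin.cons x w))
    (w : Fin (n + 1) → α) (σ : Equiv.Perm (Fin (n + 1))) : f (w ∘ σ) = f w := by
  have lift (w) (e : Equiv.Perm (Fin n)) : f (w ∘ Equiv.Perm.decomposeFin.symm (0, e)) = f w := by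
    simpa only [cons_comp_perm, Fin.cons_self_tail] using tail (w 0) (Fin.tail w) e
  have swap_zero (w) (p : Fin (n + 1)) : f (w ∘ Equiv.swap 0 p) = f w := by
    cases p using Fin.cases with
    | zero => simp
    | succ q =>
      obtain ⟨m, rfl⟩ := Nat.exists_eq_succ_of_ne_zero q.pos.ne'
      let τ := Equiv.Perm.decomposeFin.symm (0, Equiv.swap 0 q)
      have conj : Equiv.swap 0 q.succ ∘ τ = τ ∘ Equiv.swap 0 1 := by
        funext k
        have τ_one : τ 1 = q.succ :=
          (Equiv.Perm.decomposeFin_symm_apply_succ (Equiv.swap 0 q) 0 0).trans (by simp)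
        have map_swap := τ.injective.map_swap 0 1 k
        rw [τ_one, Equiv.Perm.decomposeFin_symm_apply_zero] at map_swap
        exact map_swap.symm
      calc f (w ∘ Equiv.swap 0 q.succ)
        _ = f ((w ∘ Equiv.swap 0 q.succ) ∘ τ) := (lift _ _).symm
        _ = f ((w ∘ τ) ∘ Equiv.swap 0 1) := by rw [Function.comp_assoc, conj, Function.comp_assoc]
        _ = f w := (swap _).trans (lift _ _)
  obtain ⟨⟨p, e⟩, rfl⟩ := Equiv.Perm.decomposeFin.symm.surjective σ
  have factor : Equiv.Perm.decomposeFin.symm (p, e) =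
      Equiv.swap 0 p * Equiv.Perm.decomposeFin.symm (0, e) := by
    ext k
    cases k using Fin.cases <;> simp
  rw [factor, Equiv.Perm.coe_mul, ← Function.comp_assoc, lift, swap_zero]

variable {g : Type*} [AddCommGroup g] [Module F g]

theorem isBiform_zero_zero (c : (Fin 0 → g) → (Fin 0 → g) → F) : IsBiform c where
  alternating w := ⟨AlternatingMap.constOfIsEmpty F g (Fin 0) (c 0 w),
    fun v ↦ congrArg (c · w) (Subsingleton.elim 0 v)⟩
  multilinear v := ⟨MultilinearMap.constOfIsEmpty F (fun _ ↦ g) (c v 0),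
    fun w ↦ congrArg (c v) (Subsingleton.elim 0 w)⟩
  symmetric v w σ := congrArg (c v) (Subsingleton.elim (w ∘ σ) w)

theorem apply_eq_zero_of_ι_ι_self {W : WeilFamily F g} {i j : ℕ}
    (biform : ∀ x, IsBiform (ι x W i j)) (square : ∀ x, ι x (ι x W) = 0)
    (v : Fin (i + 1) → g) (w : Fin j → g) (s t : Fin (i + 1)) (h : v s = v t) (hst : s ≠ t) :
    W (i + 1) j v w = 0 := by
  have head (t : Fin i) (h : v 0 = v t.succ) : W (i + 1) j v w = 0 := by
    obtain ⟨n, rfl⟩ := Nat.exists_eq_succ_of_ne_zero t.pos.ne'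
    have front := (biform (v 0)).apply_update_left (Fin.tail v) t (v 0) w
    rw [Function.update_eq_self_iff.mpr h] at front
    rw [apply_succ_left W, front]
    exact mul_eq_zero_of_right _
      (congrFun₂ (congrFun₂ (square (v 0)) n j) (Fin.tail v ∘ t.succAbove) w)
  cases s using Fin.cases with
  | zero =>
    cases t using Fin.cases with
    | zero => exact (hst rfl).elim
    | succ t => exact head t h
  | succ s =>
    cases t using Fin.cases with
    | zero => exact head s h.symm
    | succ t =>
      obtain ⟨a, ha⟩ := (biform (v 0)).alternating w
      rw [apply_succ_left W, ← ha]
      exact a.map_eq_zero_of_eq (Fin.tail v) h (ne_of_apply_ne Fin.succ hst)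

theorem IsBiform.of_ι {W : WeilFamily F g} {i j : ℕ} (biform : ∀ x, IsBiform (ι x W i j))
    (linear : IsLinearMap F fun x ↦ ι x W) (square : ∀ x, ι x (ι x W) = 0) :
    IsBiform (W (i + 1) j) where
  alternating w := by
    choose a ha using fun x ↦ (biform x).alternating w
    let a' : g →ₗ[F] MultilinearMap F (fun _ : Fin i ↦ g) F :=
      { toFun x := (a x).toMultilinearMap
        map_add' x y := by
          ext v; simpa [ha] using congrFun₂ (congrFun₂ (linear.map_add x y) i j) v w
        map_smul' c x := by
          ext v; simpa [ha] using congrFun₂ (congrFun₂ (linear.map_smul c x) i j) v w }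
    let u : MultilinearMap F (fun _ : Fin (i + 1) ↦ g) F := LinearMap.uncurryLeft a'
    have hu (v : Fin (i + 1) → g) : u v = W (i + 1) j v w :=
      (ha _ _).trans (apply_succ_left W i j v w).symm
    exact ⟨{ u with
      map_eq_zero_of_eq' v s t h hst :=
        (hu v).trans (apply_eq_zero_of_ι_ι_self biform square v w s t h hst) }, hu⟩
  multilinear v := by
    obtain ⟨s, hs⟩ := (biform (v 0)).multilinear (Fin.tail v)
    exact ⟨s, fun w ↦ (hs w).trans (apply_succ_left W i j v w).symm⟩
  symmetric v w σ := by
    simpa only [apply_succ_left] using (biform (v 0)).symmetric (Fin.tail v) w σ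

theorem IsBiform.of_κ {W : WeilFamily F g} {i j : ℕ} (biform : ∀ x, IsBiform (κ x W i j))
    (linear : IsLinearMap F fun x ↦ κ x W) (comm : ∀ x y, κ x (κ y W) = κ y (κ x W)) :
    IsBiform (W i (j + 1)) where
  alternating w := by
    obtain ⟨a, ha⟩ := (biform (w 0)).alternating (Fin.tail w)
    exact ⟨a, fun v ↦ (ha v).trans (apply_succ_right W i j v w).symm⟩
  multilinear v := by
    choose s hs using fun x ↦ (biform x).multilinear v
    let s' : g →ₗ[F] MultilinearMap F (fun _ : Fin j ↦ g) F :=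
      { toFun := s
        map_add' x y := by
          ext w; simpa [hs] using congrFun₂ (congrFun₂ (linear.map_add x y) i j) v w
        map_smul' c x := by
          ext w; simpa [hs] using congrFun₂ (congrFun₂ (linear.map_smul c x) i j) v w }
    exact ⟨LinearMap.uncurryLeft s', fun w ↦ (hs _ _).trans (apply_succ_right W i j v w).symm⟩
  symmetric v := by
    refine apply_comp_perm_of_cons (fun w ↦ ?_) fun x w ↦ (biform x).symmetric v w
    cases j with
    | zero => simp
    | succ j =>
      have swapped : w ∘ Equiv.swap 0 1 =
          Fin.cons (w 1) (Fin.cons (w 0) (Fin.tail (Fin.tail w))) := by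
        funext k
        refine Fin.cases (by simp) (fun k ↦ Fin.cases (by simp) (fun k ↦ ?_) k) k
        simp [Equiv.swap_apply_of_ne_of_ne, Fin.ext_iff, Fin.tail]
      rw [swapped]
      refine (congrFun₂ (congrFun₂ (comm (w 0) (w 1)) i j) v (Fin.tail (Fin.tail w))).trans ?_
      refine congrArg (W i (j + 2) v) ?_
      rw [show w 1 = Fin.tail w 0 from rfl, Fin.cons_self_tail, Fin.cons_self_tail]

theorem mapsTo_cochains {T : End F (WeilFamily F g)} (ε : F)
    (ι_sub : ∀ W ∈ cochains F g, ∀ x, ι x (T W) - ε • T (ι x W) ∈ cochains F g)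
    (ι_linear : ∀ W ∈ cochains F g, IsLinearMap F fun x ↦ ι x (T W))
    (ι_square : ∀ W ∈ cochains F g, ∀ x, ι x (ι x (T W)) = 0)
    (κ_sub : ∀ W ∈ cochains F g, ∀ x, κ x (T W) - T (κ x W) ∈ cochains F g)
    (κ_linear : ∀ W ∈ cochains F g, IsLinearMap F fun x ↦ κ x (T W))
    (κ_comm : ∀ W ∈ cochains F g, ∀ x y, κ x (κ y (T W)) = κ y (κ x (T W))) :
    Set.MapsTo T (cochains F g) (cochains F g) := by
  intro W hW i
  induction i generalizing W with
  | zero =>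
    intro j
    induction j generalizing W with
    | zero => exact isBiform_zero_zero _
    | succ j ih =>
      refine .of_κ (fun x ↦ ?_) (κ_linear W hW) (κ_comm W hW)
      rw [← sub_add_cancel (κ x (T W)) (T (κ x W))]
      exact (κ_sub W hW x 0 j).add (ih (κ_mem_cochains hW x))
  | succ i ih =>
    refine fun j ↦ .of_ι (fun x ↦ ?_) (ι_linear W hW) (ι_square W hW)
    rw [← sub_add_cancel (ι x (T W)) (ε • T (ι x W))]
    exact (ι_sub W hW x i j).add ((ih (ι_mem_cochains hW x) j).smul ε)

theorem eq_zero_of_ι {T : End F (WeilFamily F g)} (ε : F)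
    (ι_T : ∀ W ∈ cochains F g, ∀ x, ι x (T W) = ε • T (ι x W))
    (base : ∀ W ∈ cochains F g, ∀ j, T W 0 j = 0) {W : WeilFamily F g}
    (hW : W ∈ cochains F g) : T W = 0 := by
  funext i
  induction i generalizing W with
  | zero => exact funext (base W hW)
  | succ i ih =>
    funext j v w
    rw [apply_succ_left (T W), ι_T W hW]
    simp [ih (ι_mem_cochains hW (v 0))]

theorem eq_zero_of_ι_of_κ {T : End F (WeilFamily F g)} (ε : F)
    (ι_T : ∀ W ∈ cochains F g, ∀ x, ι x (T W) = ε • T (ι x W))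
    (κ_T : ∀ W ∈ cochains F g, ∀ x, κ x (T W) = T (κ x W))
    (base : ∀ W ∈ cochains F g, T W 0 0 = 0) {W : WeilFamily F g}
    (hW : W ∈ cochains F g) : T W = 0 := by
  refine eq_zero_of_ι ε ι_T (fun W hW j ↦ ?_) hW
  induction j generalizing W with
  | zero => exact base W hW
  | succ j ih =>
    funext v w
    rw [apply_succ_right (T W), κ_T W hW, ih _ (κ_mem_cochains hW _)]
    rfl

end Criteria

section ChevalleyEilenberg

/-! ### The Cartan formula -/

theorem pairTupleW_cons_zero {G : Type*} {k : ℕ} (x : G) (v : Fin (k + 1) → G) (b : G)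
    (l : Fin (k + 1)) :
    pairTupleW (k + 1) (Fin.cons x v) b 0 l.succ = Fin.cons b (v ∘ l.succAbove) := by
  funext t
  refine Fin.cases rfl (fun t ↦ ?_) t
  simp only [pairTupleW, Fin.val_zero, Fin.val_succ, Fin.cons_succ, Function.comp_apply,
    Fin.succAbove, Fin.lt_def, Fin.val_castSucc]
  split_ifs <;> first | rfl | contradiction | omega

theorem pairTupleW_eq_cons {G : Type*} {k : ℕ} (v : Fin (k + 2) → G) (b : G)
    (a l : Fin (k + 2)) :
    pairTupleW (k + 1) v b a l = Fin.cons b (Fin.tail (pairTupleW (k + 1) v b a l)) :=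
  (Fin.cons_self_tail _).symm

theorem pairTupleW_cons_succ {G : Type*} {k : ℕ} (x : G) (v : Fin (k + 2) → G) (b : G)
    (a l : Fin (k + 2)) :
    pairTupleW (k + 2) (Fin.cons x v) b a.succ l.succ =
      Fin.cons b (Fin.cons x (Fin.tail (pairTupleW (k + 1) v b a l))) := by
  funext t
  refine Fin.cases rfl (fun t ↦ Fin.cases (by simp [pairTupleW]) (fun t ↦ ?_) t) t
  simp only [pairTupleW, Fin.val_succ, Fin.cons_succ, Fin.tail]
  split_ifs <;> first | rfl | omega

variable {g : Type*} [LieRing g] [LieAlgebra F g] {W : WeilFamily F g}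

theorem apply_pairTupleW_cons_zero (hW : W ∈ cochains F g) {i j : ℕ} (x b : g)
    (v : Fin (i + 1) → g) (w : Fin j → g) (l : Fin (i + 1)) :
    W (i + 1) j (pairTupleW (i + 1) (Fin.cons x v) b 0 l.succ) w =
      (-1) ^ (l : ℕ) * W (i + 1) j (Function.update v l b) w := by
  rw [pairTupleW_cons_zero, (hW (i + 1) j).apply_update_left, ← mul_assoc, ← mul_pow]
  simp

theorem apply_pairTupleW_cons_succ (hW : W ∈ cochains F g) {i j : ℕ} (x b : g)
    (v : Fin (i + 2) → g) (w : Fin j → g) (a l : Fin (i + 2)) :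
    W (i + 2) j (pairTupleW (i + 2) (Fin.cons x v) b a.succ l.succ) w =
      -ι x W (i + 1) j (pairTupleW (i + 1) v b a l) w := by
  rw [pairTupleW_cons_succ, pairTupleW_eq_cons v b, Fin.tail_cons]
  exact congrFun₂ (congrFun₂ (ι_ι_comm hW x b) i j) (Fin.tail (pairTupleW (i + 1) v b a l)) w

theorem sum_pairTupleW_cons (hW : W ∈ cochains F g) {i j : ℕ} (x : g) (v : Fin (i + 1) → g)
    (w : Fin j → g) :
    (∑ a : Fin (i + 2), ∑ l : Fin (i + 2), if a < l then (-1) ^ (a.1 + l.1) * W (i + 1) j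
        (pairTupleW (i + 1) (Fin.cons x v)
          ⁅(Fin.cons x v : Fin (i + 2) → g) a, (Fin.cons x v : Fin (i + 2) → g) l⁆ a l) w else 0) =
      -(∑ t, W (i + 1) j (Function.update v t ⁅x, v t⁆) w) -
        ∑ a : Fin (i + 1), ∑ l : Fin (i + 1), if a < l then
          (-1) ^ (a.1 + l.1) * ι x W i j (pairTupleW i v ⁅v a, v l⁆ a l) w else 0 := by
  simp only [Fin.sum_univ_succ (n := i + 1), Fin.cons_zero, Fin.cons_succ, if_false,
    Fin.succ_pos, if_true, Fin.not_lt_zero, zero_add, Fin.succ_lt_succ_iff,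
    apply_pairTupleW_cons_zero hW, sub_eq_add_neg, ← Finset.sum_neg_distrib]
  congr 1
  · refine Finset.sum_congr rfl fun t _ ↦ ?_
    rw [← mul_assoc, ← pow_add, Odd.neg_one_pow ⟨t, by simp; ring⟩, neg_one_mul]
  · refine Finset.sum_congr rfl fun a _ ↦ Finset.sum_congr rfl fun l _ ↦ ?_
    cases i with
    | zero => simp [Fin.fin_one_eq_zero]
    | succ i =>
      rw [apply_pairTupleW_cons_succ hW, neg_ite, neg_zero]
      congr 1
      simp only [Fin.val_succ]
      ring

theorem ι_dLie (hW : W ∈ cochains F g) (x : g) :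
    ι x (dLie W) = lieDer x W - dLie (ι x W) := by
  funext i j v w
  cases i with
  | zero => simp [dLie, dLieS, lieDer, der]
  | succ i =>
    have pairs := sum_pairTupleW_cons hW x v w
    simp only [ι, dLie, dLieS, lieDer, der, LinearMap.coe_mk, AddHom.coe_mk, Pi.sub_apply,
      LinearMap.neg_apply, Pi.neg_apply] at pairs ⊢
    rw [pairs, Fin.sum_univ_succ]
    simp only [Fin.cons_zero, Fin.cons_succ, cons_comp_succAbove_zero, cons_comp_succAbove_succ,
      Fin.val_zero, Fin.val_succ, pow_succ _ (_ + 1), mul_neg_one, neg_mul,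
      Finset.sum_neg_distrib, LieAlgebra.ad_apply]
    ring

end ChevalleyEilenberg

section Stability

/-! ### The operators preserve cochains -/

variable {g : Type*}

section Linear

variable [AddCommGroup g] [Module F g] {W : WeilFamily F g}

theorem der_mem_cochains (φ : End F g) (hW : W ∈ cochains F g) : der φ W ∈ cochains F g := by
  refine mapsTo_cochains 1 (fun W hW x ↦ ?_) (fun W hW ↦ ⟨fun x y ↦ ?_, fun c x ↦ ?_⟩)
    (fun W hW x ↦ ?_) (fun W hW x ↦ ?_) (fun W hW ↦ ⟨fun x y ↦ ?_, fun c x ↦ ?_⟩)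
    (fun W hW x y ↦ ?_) hW
  · simpa [ι_der] using ι_mem_cochains hW (φ x)
  · simp only [ι_der, map_add, (isLinearMap_ι hW).map_add]
    abel
  · simp only [ι_der, map_smul, (isLinearMap_ι hW).map_smul, smul_add]
  · simp [ι_der, ι_ι_self hW, ι_ι_comm hW x (φ x)]
  · simpa [κ_der] using κ_mem_cochains hW (φ x)
  · simp only [κ_der, map_add, (isLinearMap_κ hW).map_add]
    abel
  · simp only [κ_der, map_smul, (isLinearMap_κ hW).map_smul, smul_add]
  · simp only [κ_der, map_add, κ_κ_comm hW x y, κ_κ_comm hW (φ x) y, κ_κ_comm hW x (φ y)]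
    abel

theorem isLinearMap_der (hW : W ∈ cochains F g) : IsLinearMap F fun φ : End F g ↦ der φ W where
  map_add φ ψ := by
    funext i j v w
    obtain ⟨a, ha⟩ := (hW i j).alternating w
    obtain ⟨s, hs⟩ := (hW i j).multilinear v
    simp only [der, LinearMap.coe_mk, AddHom.coe_mk, Pi.add_apply, ← ha, ← hs,
      LinearMap.add_apply, a.map_update_add, s.map_update_add, Finset.sum_add_distrib]
    ring
  map_smul c φ := by
    funext i j v w
    obtain ⟨a, ha⟩ := (hW i j).alternating w
    obtain ⟨s, hs⟩ := (hW i j).multilinear v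
    simp only [der, LinearMap.coe_mk, AddHom.coe_mk, Pi.smul_apply, ← ha, ← hs,
      LinearMap.smul_apply, a.map_update_smul, s.map_update_smul, Finset.smul_sum, smul_add]

theorem isLinearMap_koszulHomotopy (hW : W ∈ cochains F g) :
    IsLinearMap F fun p : End F g ↦ koszulHomotopy p W where
  map_add p q := by
    funext i j v w
    cases i with
    | zero => simp
    | succ i =>
      have add (k) := congrFun₂ (congrFun₂ ((isLinearMap_κ hW).map_add (p (v k)) (q (v k))) i j)
        (v ∘ k.succAbove) w
      simp only [κ_apply, Pi.add_apply] at add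
      simp only [koszulHomotopy, LinearMap.coe_mk, AddHom.coe_mk, Pi.add_apply,
        LinearMap.add_apply, add, mul_add, Finset.sum_add_distrib]
  map_smul c p := by
    funext i j v w
    cases i with
    | zero => simp
    | succ i =>
      have smul (k) := congrFun₂ (congrFun₂ ((isLinearMap_κ hW).map_smul c (p (v k))) i j)
        (v ∘ k.succAbove) w
      simp only [κ_apply, Pi.smul_apply] at smul
      simp only [koszulHomotopy, LinearMap.coe_mk, AddHom.coe_mk, Pi.smul_apply,
        LinearMap.smul_apply, smul, Finset.mul_sum, smul_eq_mul,
        mul_left_comm c]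

theorem κ_koszulHomotopy (p : End F g) (hW : W ∈ cochains F g) (x : g) :
    κ x (koszulHomotopy p W) = koszulHomotopy p (κ x W) := by
  refine sub_eq_zero.mp (eq_zero_of_ι (T := κ x * koszulHomotopy p - koszulHomotopy p * κ x) (-1)
    (fun W hW y ↦ ?_) (fun W _ j ↦ ?_) hW)
  · simp only [LinearMap.sub_apply, Module.End.mul_apply, map_sub, ι_κ, ι_koszulHomotopy,
      κ_κ_comm hW x (p y)]
    module
  · funext v w
    simp

theorem koszulHomotopy_mem_cochains (p : End F g) (hW : W ∈ cochains F g) :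
    koszulHomotopy p W ∈ cochains F g := by
  refine mapsTo_cochains (-1) (fun W hW x ↦ ?_) (fun W hW ↦ ⟨fun x y ↦ ?_, fun c x ↦ ?_⟩)
    (fun W hW x ↦ ?_) (fun W hW x ↦ ?_) (fun W hW ↦ ⟨fun x y ↦ ?_, fun c x ↦ ?_⟩)
    (fun W hW x y ↦ ?_) hW
  · simpa [ι_koszulHomotopy] using κ_mem_cochains hW (p x)
  · simp only [ι_koszulHomotopy, map_add, (isLinearMap_ι hW).map_add, (isLinearMap_κ hW).map_add]
    abel
  · simp only [ι_koszulHomotopy, map_smul, (isLinearMap_ι hW).map_smul,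
      (isLinearMap_κ hW).map_smul, smul_sub]
  · simp [ι_koszulHomotopy, ι_ι_self hW, ι_κ]
  · simp [κ_koszulHomotopy p hW]
  · simp only [κ_koszulHomotopy p hW, (isLinearMap_κ hW).map_add, map_add]
  · simp only [κ_koszulHomotopy p hW, (isLinearMap_κ hW).map_smul, map_smul]
  · simp only [κ_koszulHomotopy p hW, κ_koszulHomotopy p (κ_mem_cochains hW _), κ_κ_comm hW x y]

theorem dKos_mem_cochains (hW : W ∈ cochains F g) : dKos W ∈ cochains F g := by
  refine mapsTo_cochains (-1) (fun W hW x ↦ ?_) (fun W hW ↦ ⟨fun x y ↦ ?_, fun c x ↦ ?_⟩)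
    (fun W hW x ↦ ?_) (fun W hW x ↦ ?_) (fun W hW ↦ ⟨fun x y ↦ ?_, fun c x ↦ ?_⟩)
    (fun W hW x y ↦ ?_) hW
  · simp [ι_dKos hW]
  · simp only [ι_dKos hW, (isLinearMap_ι hW).map_add, map_add, neg_add]
  · simp only [ι_dKos hW, (isLinearMap_ι hW).map_smul, map_smul, smul_neg]
  · simp [ι_dKos hW, ι_dKos (ι_mem_cochains hW x), ι_ι_self hW]
  · simpa [κ_dKos] using ι_mem_cochains hW x
  · simp only [κ_dKos, map_add, (isLinearMap_κ hW).map_add, (isLinearMap_ι hW).map_add]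
    abel
  · simp only [κ_dKos, map_smul, (isLinearMap_κ hW).map_smul, (isLinearMap_ι hW).map_smul,
      smul_add]
  · simp only [κ_dKos, map_add, κ_κ_comm hW x y, ι_κ]
    abel

end Linear

variable [LieRing g] [LieAlgebra F g] {W : WeilFamily F g}

theorem lieDer_mem_cochains (hW : W ∈ cochains F g) (x : g) : lieDer x W ∈ cochains F g :=
  neg_mem (der_mem_cochains _ hW)

theorem isLinearMap_lieDer (hW : W ∈ cochains F g) : IsLinearMap F fun x ↦ lieDer x W where
  map_add x y := by
    simp only [lieDer_apply, map_add, (isLinearMap_der hW).map_add, neg_add]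
  map_smul c x := by
    simp only [lieDer_apply, map_smul, (isLinearMap_der hW).map_smul, smul_neg]

theorem κ_dLie (hW : W ∈ cochains F g) (x : g) :
    κ x (dLie W) = dLie (κ x W) + koszulHomotopy (LieAlgebra.ad F g x) W := by
  refine sub_eq_zero.mp (eq_zero_of_ι
    (T := κ x * dLie - (dLie * κ x + koszulHomotopy (LieAlgebra.ad F g x))) (-1)
    (fun W hW y ↦ ?_) (fun W _ j ↦ ?_) hW)
  · have bracket : κ ⁅y, x⁆ W = -κ ⁅x, y⁆ W := by
      rw [← lie_skew, (isLinearMap_κ hW).map_neg]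
    simp only [LinearMap.sub_apply, LinearMap.add_apply, Module.End.mul_apply, map_sub, map_add,
      ι_κ, ι_koszulHomotopy, ι_dLie hW, ι_dLie (κ_mem_cochains hW x), κ_lieDer,
      LieAlgebra.ad_apply, bracket]
    module
  · funext v w
    simp

theorem dLie_mem_cochains (hW : W ∈ cochains F g) : dLie W ∈ cochains F g := by
  refine mapsTo_cochains (-1) (fun W hW x ↦ ?_) (fun W hW ↦ ⟨fun x y ↦ ?_, fun c x ↦ ?_⟩)
    (fun W hW x ↦ ?_) (fun W hW x ↦ ?_) (fun W hW ↦ ⟨fun x y ↦ ?_, fun c x ↦ ?_⟩)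
    (fun W hW x y ↦ ?_) hW
  · simpa [ι_dLie hW] using lieDer_mem_cochains hW x
  · simp only [ι_dLie hW, (isLinearMap_ι hW).map_add, (isLinearMap_lieDer hW).map_add, map_add]
    abel
  · simp only [ι_dLie hW, (isLinearMap_ι hW).map_smul, (isLinearMap_lieDer hW).map_smul,
      map_smul, smul_sub]
  · simp [ι_dLie hW, ι_dLie (ι_mem_cochains hW x), ι_lieDer, ι_ι_self hW,
      (isLinearMap_ι hW).map_zero]
  · simpa [κ_dLie hW] using koszulHomotopy_mem_cochains _ hW
  · simp only [κ_dLie hW, (isLinearMap_κ hW).map_add, map_add,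
      (isLinearMap_koszulHomotopy hW).map_add]
    abel
  · simp only [κ_dLie hW, (isLinearMap_κ hW).map_smul, map_smul,
      (isLinearMap_koszulHomotopy hW).map_smul, smul_add]
  · simp only [κ_dLie hW, κ_dLie (κ_mem_cochains hW _), map_add, κ_koszulHomotopy _ hW,
      κ_κ_comm hW x y]
    abel

theorem weilD_mem_cochains (hW : W ∈ cochains F g) : weilD W ∈ cochains F g :=
  add_mem (dLie_mem_cochains hW) (dKos_mem_cochains hW)

end Stability

section Commutators

/-! ### The commutation relations -/

variable {g : Type*}

section Linear

variable [AddCommGroup g] [Module F g] {W : WeilFamily F g}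

theorem der_der_sub_der_der (φ ψ : End F g) (hW : W ∈ cochains F g) :
    der φ (der ψ W) - der ψ (der φ W) = -der ⁅φ, ψ⁆ W := by
  refine sub_eq_zero.mp (eq_zero_of_ι_of_κ
    (T := der φ * der ψ - der ψ * der φ - -der ⁅φ, ψ⁆) 1
    (fun W hW x ↦ ?_) (fun W hW x ↦ ?_) (fun W _ ↦ ?_) hW)
  · simp only [LinearMap.sub_apply, LinearMap.neg_apply, Module.End.mul_apply, map_sub, map_neg,
      map_add, ι_der, LieRing.of_associative_ring_bracket, (isLinearMap_ι hW).map_sub]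
    module
  · simp only [LinearMap.sub_apply, LinearMap.neg_apply, Module.End.mul_apply, map_sub, map_neg,
      map_add, κ_der, LieRing.of_associative_ring_bracket, (isLinearMap_κ hW).map_sub]
    module
  · funext v w
    simp

theorem der_koszulHomotopy_sub (φ p : End F g) (hW : W ∈ cochains F g) :
    der φ (koszulHomotopy p W) - koszulHomotopy p (der φ W) = -koszulHomotopy ⁅φ, p⁆ W := by
  refine sub_eq_zero.mp (eq_zero_of_ι
    (T := der φ * koszulHomotopy p - koszulHomotopy p * der φ - -koszulHomotopy ⁅φ, p⁆) (-1)
    (fun W hW x ↦ ?_) (fun W _ j ↦ ?_) hW)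
  · simp only [LinearMap.sub_apply, LinearMap.neg_apply, Module.End.mul_apply, map_sub, map_neg,
      map_add, ι_der, κ_der, ι_koszulHomotopy, LieRing.of_associative_ring_bracket,
      (isLinearMap_κ hW).map_sub]
    module
  · funext v w
    simp [der]

theorem dKos_koszulHomotopy_add (p : End F g) (hW : W ∈ cochains F g) :
    dKos (koszulHomotopy p W) + koszulHomotopy p (dKos W) = der p W := by
  refine sub_eq_zero.mp (eq_zero_of_ι_of_κ
    (T := dKos * koszulHomotopy p + koszulHomotopy p * dKos - der p) 1
    (fun W hW x ↦ ?_) (fun W hW x ↦ ?_) (fun W _ ↦ ?_) hW)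
  · simp only [LinearMap.sub_apply, LinearMap.add_apply, Module.End.mul_apply, map_sub, map_add,
      map_neg, ι_dKos hW, ι_dKos (koszulHomotopy_mem_cochains p hW), κ_dKos, ι_der,
      ι_koszulHomotopy]
    module
  · simp only [LinearMap.sub_apply, LinearMap.add_apply, Module.End.mul_apply, map_sub, map_add,
      κ_dKos, κ_der, ι_koszulHomotopy, κ_koszulHomotopy p hW,
      κ_koszulHomotopy p (dKos_mem_cochains hW)]
    module
  · funext v w
    simp

end Linear

variable [LieRing g] [LieAlgebra F g] {W : WeilFamily F g}

theorem lieDer_lieDer_sub (hW : W ∈ cochains F g) (x y : g) :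
    lieDer x (lieDer y W) - lieDer y (lieDer x W) = lieDer ⁅x, y⁆ W := by
  simpa [lieDer_apply] using
    der_der_sub_der_der (LieAlgebra.ad F g x) (LieAlgebra.ad F g y) hW

theorem lieDer_koszulHomotopy (p : End F g) (hW : W ∈ cochains F g) (x : g) :
    lieDer x (koszulHomotopy p W) =
      koszulHomotopy p (lieDer x W) + koszulHomotopy ⁅LieAlgebra.ad F g x, p⁆ W := by
  rw [lieDer_apply, lieDer_apply, map_neg,
    sub_eq_iff_eq_add.mp (der_koszulHomotopy_sub (LieAlgebra.ad F g x) p hW)]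
  abel

theorem dLie_koszulHomotopy_ad_add (hW : W ∈ cochains F g) (x : g) :
    dLie (koszulHomotopy (LieAlgebra.ad F g x) W) +
      koszulHomotopy (LieAlgebra.ad F g x) (dLie W) = 0 := by
  refine eq_zero_of_ι
    (T := dLie * koszulHomotopy (LieAlgebra.ad F g x) +
      koszulHomotopy (LieAlgebra.ad F g x) * dLie) 1
    (fun W hW y ↦ ?_) (fun W _ j ↦ ?_) hW
  · have skew : koszulHomotopy ⁅LieAlgebra.ad F g y, LieAlgebra.ad F g x⁆ W =
        -koszulHomotopy (LieAlgebra.ad F g ⁅x, y⁆) W := by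
      rw [← (isLinearMap_koszulHomotopy hW).map_neg, ← map_neg, lie_skew]
      simp only [LieHom.map_lie]
    simp only [LinearMap.add_apply, Module.End.mul_apply, map_sub, map_add,
      ι_dLie (koszulHomotopy_mem_cochains _ hW), ι_dLie hW, ι_koszulHomotopy, κ_dLie hW,
      lieDer_koszulHomotopy _ hW, skew, LieAlgebra.ad_apply]
    module
  · funext v w
    simp

theorem ι_weilD (hW : W ∈ cochains F g) (x : g) :
    ι x (weilD W) = lieDer x W - weilD (ι x W) := by
  simp only [weilD_apply, map_add, ι_dLie hW, ι_dKos hW]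
  abel

theorem κ_weilD (hW : W ∈ cochains F g) (x : g) :
    κ x (weilD W) =
      weilD (κ x W) + (ι x W + koszulHomotopy (LieAlgebra.ad F g x) W) := by
  simp only [weilD_apply, map_add, κ_dLie hW, κ_dKos]
  abel

theorem lieDer_weilD (hW : W ∈ cochains F g) (x : g) :
    lieDer x (weilD W) = weilD (lieDer x W) := by
  refine sub_eq_zero.mp (eq_zero_of_ι_of_κ (T := lieDer x * weilD - weilD * lieDer x) (-1)
    (fun W hW y ↦ ?_) (fun W hW y ↦ ?_) (fun W _ ↦ ?_) hW)
  · simp only [LinearMap.sub_apply, Module.End.mul_apply, map_sub, ι_lieDer, ι_weilD hW,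
      ι_weilD (lieDer_mem_cochains hW x), ← lieDer_lieDer_sub hW x y]
    module
  · simp only [LinearMap.sub_apply, Module.End.mul_apply, map_sub, map_add, ι_lieDer, κ_lieDer,
      κ_weilD hW, κ_weilD (lieDer_mem_cochains hW x), lieDer_koszulHomotopy _ hW,
      LieHom.map_lie]
    module
  · funext v w
    simp [weilD_apply_zero_zero, lieDer_apply]

theorem weilD_weilD (hW : W ∈ cochains F g) : weilD (weilD W) = 0 := by
  refine eq_zero_of_ι_of_κ (T := weilD * weilD) 1
    (fun W hW x ↦ ?_) (fun W hW x ↦ ?_) (fun W _ ↦ weilD_apply_zero_zero (weilD W)) hW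
  · simp only [Module.End.mul_apply, map_sub, ι_weilD hW, ι_weilD (weilD_mem_cochains hW),
      lieDer_weilD hW]
    module
  · have cartan := (ι_weilD hW x).trans (by rw [lieDer_apply, ← dKos_koszulHomotopy_add _ hW])
    have chevalley := eq_neg_of_add_eq_zero_left (dLie_koszulHomotopy_ad_add hW x)
    simp only [Module.End.mul_apply, map_add, κ_weilD hW, κ_weilD (weilD_mem_cochains hW), cartan]
    simp only [weilD_apply (koszulHomotopy _ _), chevalley]
    simp only [weilD_apply W, map_add]
    module

end Commutators

section Relative

/-! ### Relative cochains -/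

variable {g : Type*}

section Linear

variable [AddCommGroup g] [Module F g]

/-- The horizontal cochains of a submodule `P` of `g`, i.e. the submodule
`∏ (Λ^i (g/P) ⊗ S^j g)^*`. -/
def horizontal (P : Submodule F g) : Submodule F (WeilFamily F g) :=
  cochains F g ⊓ ⨅ x ∈ P, LinearMap.ker (ι x)

theorem mem_horizontal {P : Submodule F g} {W : WeilFamily F g} :
    W ∈ horizontal P ↔ W ∈ cochains F g ∧ ∀ x ∈ P, ι x W = 0 := by
  simp [horizontal, Submodule.mem_iInf]

theorem apply_eq_zero_of_mem_horizontal {P : Submodule F g} {W : WeilFamily F g}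
    (hW : W ∈ horizontal P) {i j : ℕ} {v : Fin i → g} {t : Fin i} (ht : v t ∈ P)
    (w : Fin j → g) : W i j v w = 0 := by
  obtain ⟨i, rfl⟩ := Nat.exists_eq_succ_of_ne_zero t.pos.ne'
  obtain ⟨cochain, ι_eq_zero⟩ := mem_horizontal.mp hW
  have front := (cochain (i + 1) j).apply_update_left v t (v t) w
  rw [Function.update_eq_self] at front
  rw [front]
  exact mul_eq_zero_of_right _
    (congrFun₂ (congrFun₂ (ι_eq_zero _ ht) i j) (v ∘ t.succAbove) w)

theorem koszulHomotopy_mem_horizontal {p : End F g} {W : WeilFamily F g}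
    (hW : W ∈ horizontal (LinearMap.ker p)) :
    koszulHomotopy p W ∈ horizontal (LinearMap.ker p) := by
  obtain ⟨cochain, ι_eq_zero⟩ := mem_horizontal.mp hW
  refine mem_horizontal.mpr ⟨koszulHomotopy_mem_cochains p cochain, fun x hx ↦ ?_⟩
  rw [ι_koszulHomotopy, LinearMap.mem_ker.mp hx, (isLinearMap_κ cochain).map_zero,
    ι_eq_zero x hx, map_zero, sub_zero]

theorem der_mem_horizontal {p : End F g} {W : WeilFamily F g}
    (hW : W ∈ horizontal (LinearMap.ker p)) : der p W ∈ horizontal (LinearMap.ker p) := by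
  obtain ⟨cochain, ι_eq_zero⟩ := mem_horizontal.mp hW
  refine mem_horizontal.mpr ⟨der_mem_cochains p cochain, fun x hx ↦ ?_⟩
  rw [ι_der, LinearMap.mem_ker.mp hx, (isLinearMap_ι cochain).map_zero, ι_eq_zero x hx, map_zero,
    add_zero]

/-- The families whose component of exterior degree `0` vanishes on tuples from `P`, i.e. the
kernel of restriction to `S P`. -/
def vanishingOn (P : Submodule F g) : Submodule F (WeilFamily F g) where
  carrier := {W | ∀ j v w, (∀ r, w r ∈ P) → W 0 j v w = 0}
  zero_mem' _ _ _ _ := rfl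
  add_mem' hW hW' j v w hw := by simp [hW j v w hw, hW' j v w hw]
  smul_mem' c W hW j v w hw := by simp [hW j v w hw]

variable (F g) in
/-- The families of total degree `m`, a component `W i j` having degree `i + 2 * j`. -/
def homogeneous (m : ℕ) : Submodule F (WeilFamily F g) where
  carrier := {W | ∀ i j, i + 2 * j ≠ m → W i j = 0}
  zero_mem' _ _ _ := rfl
  add_mem' hW hW' i j hij := by simp [hW i j hij, hW' i j hij]
  smul_mem' c W hW i j hij := by simp [hW i j hij]

end Linear

variable [LieRing g] [LieAlgebra F g]

theorem weilD_mem_vanishingOn {P : Submodule F g} {W : WeilFamily F g}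
    (hW : W ∈ horizontal P) : weilD W ∈ vanishingOn P := by
  intro j v w hw
  cases j with
  | zero => simp [weilD_apply]
  | succ j =>
    have contraction (r) : W 1 j (Fin.cons (w r) v) (w ∘ r.succAbove) = 0 :=
      congrFun₂ (congrFun₂ ((mem_horizontal.mp hW).2 _ (hw r)) 0 j) v (w ∘ r.succAbove)
    simp [weilD_apply, dKos, dKoszul, contraction]

variable {h : LieSubalgebra F g} {W : WeilFamily F g}

variable (h) in
/-- The basic cochains of a subalgebra `h`: the horizontal ones invariant under `h`, i.e. the
(completed) relative Weil algebra. -/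
def basic : Submodule F (WeilFamily F g) :=
  horizontal h.toSubmodule ⊓ ⨅ X ∈ h, LinearMap.ker (lieDer X)

theorem mem_basic :
    W ∈ basic h ↔ W ∈ horizontal h.toSubmodule ∧ ∀ X ∈ h, lieDer X W = 0 := by
  simp [basic, Submodule.mem_iInf]

theorem IsBiform.of_isWCochain {i j : ℕ} {c : (Fin i → g) → (Fin j → g) → F}
    (hc : IsWCochain F g h i j c) : IsBiform c := by
  obtain ⟨add_left, smul_left, alternating, add_right, smul_right, symmetric, -, -⟩ := hc
  exact {
    alternating w := ⟨{ MultilinearMap.mk' (c · w) (add_left · · · · w) (smul_left · · · · w) with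
      map_eq_zero_of_eq' v s t hv hst := alternating v s t w hst hv }, fun _ ↦ rfl⟩
    multilinear v := ⟨.mk' (c v) (add_right v) (smul_right v), fun _ ↦ rfl⟩
    symmetric }

theorem mem_basic_iff_isWCochain : W ∈ basic h ↔ ∀ i j, IsWCochain F g h i j (W i j) := by
  rw [mem_basic]
  constructor
  · rintro ⟨horizontal, invariant⟩ i j
    have cochain := (mem_horizontal.mp horizontal).1 i j
    refine ⟨fun v t x y w ↦ ?_, fun v t c x w ↦ ?_, fun v s t w hst hv ↦ ?_, fun v w r x y ↦ ?_,
      fun v w r c x ↦ ?_, cochain.symmetric,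
      fun v t w hv ↦ apply_eq_zero_of_mem_horizontal horizontal hv w, fun X hX v w ↦ ?_⟩
    · obtain ⟨a, ha⟩ := cochain.alternating w
      simpa only [ha] using a.map_update_add v t x y
    · obtain ⟨a, ha⟩ := cochain.alternating w
      simpa only [ha, smul_eq_mul] using a.map_update_smul v t c x
    · obtain ⟨a, ha⟩ := cochain.alternating w
      simpa only [ha] using a.map_eq_zero_of_eq v hv hst
    · obtain ⟨s, hs⟩ := cochain.multilinear v
      simpa only [hs] using s.map_update_add w r x y
    · obtain ⟨s, hs⟩ := cochain.multilinear v
      simpa only [hs, smul_eq_mul] using s.map_update_smul w r c x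
    · exact neg_eq_zero.mp (congrFun₂ (congrFun₂ (invariant X hX) i j) v w)
  · intro hW
    refine ⟨mem_horizontal.mpr ⟨fun i j ↦ .of_isWCochain (hW i j), fun X hX ↦ ?_⟩, fun X hX ↦ ?_⟩
    · funext i j v w
      exact (hW (i + 1) j).2.2.2.2.2.2.1 (Fin.cons X v) 0 w hX
    · funext i j v w
      exact neg_eq_zero.mpr ((hW i j).2.2.2.2.2.2.2 X hX v w)

theorem weilD_mem_basic (hW : W ∈ basic h) : weilD W ∈ basic h := by
  obtain ⟨horizontal, invariant⟩ := mem_basic.mp hW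
  obtain ⟨cochain, ι_eq_zero⟩ := mem_horizontal.mp horizontal
  refine mem_basic.mpr ⟨mem_horizontal.mpr ⟨weilD_mem_cochains cochain, fun X hX ↦ ?_⟩,
    fun X hX ↦ ?_⟩
  · rw [ι_weilD cochain, invariant X hX, ι_eq_zero X hX, map_zero, sub_zero]
  · rw [lieDer_weilD cochain, invariant X hX, map_zero]

theorem koszulHomotopy_mem_basic {p : End F g} (ker_p : LinearMap.ker p = h.toSubmodule)
    (p_lie : ∀ X ∈ h, ∀ x, p ⁅X, x⁆ = ⁅X, p x⁆) (hW : W ∈ basic h) :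
    koszulHomotopy p W ∈ basic h := by
  obtain ⟨horizontal, invariant⟩ := mem_basic.mp hW
  have cochain := (mem_horizontal.mp horizontal).1
  rw [← ker_p] at horizontal
  refine mem_basic.mpr ⟨ker_p ▸ koszulHomotopy_mem_horizontal horizontal, fun X hX ↦ ?_⟩
  have equivariant : ⁅LieAlgebra.ad F g X, p⁆ = 0 := by
    ext x
    simp [LieRing.of_associative_ring_bracket, p_lie X hX]
  rw [lieDer_koszulHomotopy p cochain, invariant X hX, map_zero, equivariant,
    (isLinearMap_koszulHomotopy cochain).map_zero, add_zero]

end Relative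

section Weight

/-! ### The weights of the derivation induced by a projection -/

open Polynomial

variable {g : Type*} [AddCommGroup g] [Module F g] {p : End F g} {W : WeilFamily F g}

theorem der_apply_piecewise (idem : IsIdempotentElem p) (hW : W ∈ horizontal (LinearMap.ker p))
    {i j : ℕ} (v : Fin i → g) (w : Fin j → g) (S : Finset (Fin j)) :
    der p W i j v (S.piecewise (p ∘ w) (w - p ∘ w)) =
      (i + S.card) * W i j v (S.piecewise (p ∘ w) (w - p ∘ w)) := by
  have p_p (x) : p (p x) = p x := LinearMap.congr_fun idem x
  set u := S.piecewise (p ∘ w) (w - p ∘ w) with hu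
  have left (t) : W i j (Function.update v t (p (v t))) u = W i j v u := by
    obtain ⟨a, ha⟩ := ((mem_horizontal.mp hW).1 i j).alternating u
    have sub := a.map_update_sub v t (v t) (p (v t))
    rw [Function.update_eq_self, ha, ha, ha,
      apply_eq_zero_of_mem_horizontal (t := t) hW (by simp [p_p])] at sub
    exact (sub_eq_zero.mp sub.symm).symm
  have right (r) : W i j v (Function.update u r (p (u r))) = if r ∈ S then W i j v u else 0 := by
    split_ifs with hr
    · rw [Function.update_eq_self_iff.mpr (by simp [hu, hr, p_p])]
    · obtain ⟨s, hs⟩ := ((mem_horizontal.mp hW).1 i j).multilinear v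
      rw [← hs]
      exact s.map_coord_zero r (by simp [hu, hr, p_p])
  simp only [der, LinearMap.coe_mk, AddHom.coe_mk, left, right, Finset.sum_const, Finset.card_univ,
    Fintype.card_fin, Finset.sum_ite_mem, Finset.univ_inter, nsmul_eq_mul, add_mul]

theorem der_pow_apply (idem : IsIdempotentElem p) (hW : W ∈ horizontal (LinearMap.ker p)) (n : ℕ)
    {i j : ℕ} (v : Fin i → g) (w : Fin j → g) :
    (der p ^ n) W i j v w = ∑ S : Finset (Fin j),
      ((i : F) + S.card) ^ n * W i j v (S.piecewise (p ∘ w) (w - p ∘ w)) := by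
  induction n generalizing W with
  | zero =>
    obtain ⟨s, hs⟩ := ((mem_horizontal.mp hW).1 i j).multilinear v
    simpa [hs] using s.map_add_univ (p ∘ w) (w - p ∘ w)
  | succ n ih =>
    rw [pow_succ, Module.End.mul_apply, ih (der_mem_horizontal hW)]
    simp only [der_apply_piecewise idem hW, pow_succ, mul_assoc]

theorem aeval_der_apply (idem : IsIdempotentElem p) (hW : W ∈ horizontal (LinearMap.ker p))
    (f : F[X]) {i j : ℕ} (v : Fin i → g) (w : Fin j → g) :
    aeval (der p) f W i j v w = ∑ S : Finset (Fin j),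
      f.eval ((i : F) + S.card) * W i j v (S.piecewise (p ∘ w) (w - p ∘ w)) := by
  induction f using Polynomial.induction_on' with
  | add f f' hf hf' =>
    simp only [map_add, LinearMap.add_apply, Pi.add_apply, hf, hf', eval_add, add_mul,
      Finset.sum_add_distrib]
  | monomial n c =>
    simp only [aeval_monomial, eval_monomial, Module.End.mul_apply,
      Module.algebraMap_end_apply, Pi.smul_apply, smul_eq_mul, der_pow_apply idem hW,
      Finset.mul_sum, mul_assoc]

/-- The polynomial `(X - 1)(X - 2)⋯(X - m)`, whose roots include all weights possible in degree `m`
except the weight `0` of the restrictions to `ker p`. -/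
def weightPoly (F : Type*) [Field F] (m : ℕ) : F[X] :=
  ∏ n ∈ Finset.Icc 1 m, (X - C (n : F))

theorem eval_weightPoly_natCast {m n : ℕ} (hn : n ∈ Finset.Icc 1 m) :
    (weightPoly F m).eval (n : F) = 0 := by
  rw [weightPoly, eval_prod]
  exact Finset.prod_eq_zero hn (by simp)

theorem eval_weightPoly_zero_ne_zero [CharZero F] (m : ℕ) : (weightPoly F m).eval 0 ≠ 0 := by
  rw [weightPoly, eval_prod, Finset.prod_ne_zero_iff]
  intro n hn
  have n_ne_zero := Nat.one_le_iff_ne_zero.mp (Finset.mem_Icc.mp hn).1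
  simpa using n_ne_zero

theorem aeval_der_weightPoly (idem : IsIdempotentElem p)
    (horizontal : W ∈ horizontal (LinearMap.ker p)) {m : ℕ} (degree : W ∈ homogeneous F g m)
    (vanishing : W ∈ vanishingOn (LinearMap.ker p)) :
    aeval (der p) (weightPoly F m) W = 0 := by
  funext i j v w
  rw [aeval_der_apply idem horizontal]
  refine Finset.sum_eq_zero fun S _ ↦ ?_
  by_cases hij : i + 2 * j = m
  · rcases Nat.eq_zero_or_pos (i + S.card) with weight | weight
    · obtain ⟨rfl, hS⟩ := Nat.add_eq_zero_iff.mp weight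
      rw [Finset.card_eq_zero.mp hS, vanishing j v _ (fun r ↦ ?_), mul_zero]
      have p_p : p (p (w r)) = p (w r) := LinearMap.congr_fun idem (w r)
      simp [p_p]
    · have card_le := S.card_le_univ
      rw [Fintype.card_fin] at card_le
      rw [← Nat.cast_add, eval_weightPoly_natCast (Finset.mem_Icc.mpr ⟨weight, by omega⟩),
        zero_mul]
  · rw [degree i j hij]
    exact mul_zero _

end Weight

section Filtration

/-! ### Operators agreeing up to lower filtration order -/

open Polynomial

variable {M : Type*} [AddCommGroup M] [Module F M] {A N : End F M} {Z : Submodule F M}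
  {L : ℕ → Submodule F M}

theorem pow_apply_sub_pow_apply_mem (A_mem : ∀ x ∈ Z, A x ∈ Z) (N_mem : ∀ J, ∀ x ∈ L J, N x ∈ L J)
    (mono : Monotone L) (lower : ∀ J, ∀ x ∈ Z, x ∈ L (J + 1) → A x - N x ∈ L J) (n : ℕ) {J : ℕ}
    {x : M} (hxZ : x ∈ Z) (hxL : x ∈ L (J + 1)) : (A ^ n) x - (N ^ n) x ∈ L J := by
  induction n generalizing x with
  | zero => simp
  | succ n ih =>
    have A_mem_L : A x ∈ L (J + 1) := by
      simpa using add_mem (mono J.le_succ (lower J x hxZ hxL)) (N_mem _ x hxL)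
    have telescope : (A ^ (n + 1)) x - (N ^ (n + 1)) x =
        ((A ^ n) (A x) - (N ^ n) (A x)) + (N ^ n) (A x - N x) := by
      simp only [pow_succ, Module.End.mul_apply, map_sub]
      abel
    rw [telescope]
    exact add_mem (ih (A_mem x hxZ) A_mem_L)
      (Module.End.pow_apply_mem_of_forall_mem n (N_mem J) _ (lower J x hxZ hxL))

theorem aeval_apply_sub_aeval_apply_mem (A_mem : ∀ x ∈ Z, A x ∈ Z)
    (N_mem : ∀ J, ∀ x ∈ L J, N x ∈ L J) (mono : Monotone L)
    (lower : ∀ J, ∀ x ∈ Z, x ∈ L (J + 1) → A x - N x ∈ L J) (f : F[X]) {J : ℕ}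
    {x : M} (hxZ : x ∈ Z) (hxL : x ∈ L (J + 1)) : aeval A f x - aeval N f x ∈ L J := by
  simp only [aeval_eq_sum_range, LinearMap.sum_apply, LinearMap.smul_apply,
    ← Finset.sum_sub_distrib, ← smul_sub]
  exact sum_mem fun n _ ↦ (L J).smul_mem _
    (pow_apply_sub_pow_apply_mem A_mem N_mem mono lower n hxZ hxL)

theorem aeval_pow_apply_eq_zero (A_mem : ∀ x ∈ Z, A x ∈ Z) (N_mem : ∀ J, ∀ x ∈ L J, N x ∈ L J)
    (mono : Monotone L) (bot : L 0 = ⊥) (lower : ∀ J, ∀ x ∈ Z, x ∈ L (J + 1) → A x - N x ∈ L J)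
    {f : F[X]} (root : ∀ x ∈ Z, aeval N f x = 0) (J : ℕ) {x : M} (hxZ : x ∈ Z) (hxL : x ∈ L J) :
    aeval A (f ^ J) x = 0 := by
  induction J generalizing x with
  | zero =>
    rw [bot, Submodule.mem_bot] at hxL
    rw [hxL, map_zero]
  | succ J ih =>
    rw [pow_succ, map_mul, Module.End.mul_apply]
    have descend := aeval_apply_sub_aeval_apply_mem A_mem N_mem mono lower f hxZ hxL
    rw [root x hxZ, sub_zero] at descend
    exact ih (aeval_apply_smul_mem_of_le_comap hxZ f A A_mem) descend

theorem exists_apply_eq_of_aeval_eq_zero (A_mem : ∀ x ∈ Z, A x ∈ Z) {f : F[X]} (hf : f.eval 0 ≠ 0)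
    {x : M} (hx : x ∈ Z) (root : aeval A f x = 0) : ∃ z ∈ Z, A z = x := by
  refine ⟨-(f.eval 0)⁻¹ • aeval A f.divX x,
    Z.smul_mem _ (aeval_apply_smul_mem_of_le_comap hx _ A A_mem), ?_⟩
  have split : A (aeval A f.divX x) + f.eval 0 • x = 0 := by
    rw [← root]
    nth_rw 3 [← X_mul_divX_add f]
    simp [coeff_zero_eq_eval_zero, Module.algebraMap_end_apply]
  rw [map_smul, eq_neg_of_add_eq_zero_left split, smul_neg, neg_smul, neg_neg, smul_smul,
    inv_mul_cancel₀ hf, one_smul]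

theorem exists_apply_eq_of_filtration (A_mem : ∀ x ∈ Z, A x ∈ Z)
    (N_mem : ∀ J, ∀ x ∈ L J, N x ∈ L J) (mono : Monotone L) (bot : L 0 = ⊥)
    (lower : ∀ J, ∀ x ∈ Z, x ∈ L (J + 1) → A x - N x ∈ L J) {f : F[X]} (hf : f.eval 0 ≠ 0)
    (root : ∀ x ∈ Z, aeval N f x = 0) {J : ℕ} {x : M} (hxZ : x ∈ Z) (hxL : x ∈ L J) :
    ∃ z ∈ Z, A z = x :=
  have pow_ne : (f ^ J).eval 0 ≠ 0 := by simpa only [eval_pow] using pow_ne_zero J hf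
  exists_apply_eq_of_aeval_eq_zero A_mem pow_ne hxZ
    (aeval_pow_apply_eq_zero A_mem N_mem mono bot lower root J hxZ hxL)

end Filtration

section Exactness

/-! ### Exactness of the cochains vanishing on the subalgebra -/

variable {g : Type*} {m : ℕ} {W : WeilFamily F g}

variable (F g) in
/-- The families without components of symmetric degree `J` or more. -/
def symDegreeLT (J : ℕ) : Submodule F (WeilFamily F g) where
  carrier := {W | ∀ i j, J ≤ j → W i j = 0}
  zero_mem' _ _ _ := rfl
  add_mem' hW hW' i j hj := by simp [hW i j hj, hW' i j hj]
  smul_mem' c W hW i j hj := by simp [hW i j hj]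

theorem symDegreeLT_mono : Monotone (symDegreeLT F g) :=
  fun _ _ hJ _ hW i j hj ↦ hW i j (hJ.trans hj)

theorem symDegreeLT_zero : symDegreeLT F g 0 = ⊥ :=
  (Submodule.eq_bot_iff _).mpr fun _ hW ↦ funext₂ fun i j ↦ hW i j j.zero_le

theorem homogeneous_le_symDegreeLT : homogeneous F g m ≤ symDegreeLT F g (m + 1) :=
  fun _ hW i j hj ↦ hW i j (by omega)

section Linear

variable [AddCommGroup g] [Module F g] {p : End F g}

theorem der_mem_symDegreeLT {J : ℕ} (hW : W ∈ symDegreeLT F g J) :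
    der p W ∈ symDegreeLT F g J := by
  intro i j hj
  funext v w
  simp [der, hW i j hj]

theorem koszulHomotopy_mem_symDegreeLT {J : ℕ} (hW : W ∈ symDegreeLT F g (J + 1)) :
    koszulHomotopy p W ∈ symDegreeLT F g J := by
  intro i j hj
  funext v w
  cases i with
  | zero => rfl
  | succ i => simp [koszulHomotopy, hW i (j + 1) (by omega)]

theorem koszulHomotopy_mem_homogeneous (hW : W ∈ homogeneous F g (m + 1)) :
    koszulHomotopy p W ∈ homogeneous F g m := by
  intro i j hij
  funext v w
  cases i with
  | zero => rfl
  | succ i => simp [koszulHomotopy, hW i (j + 1) (by omega)]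

end Linear

variable [LieRing g]

theorem dLie_mem_symDegreeLT {J : ℕ} (hW : W ∈ symDegreeLT F g J) :
    dLie W ∈ symDegreeLT F g J := by
  intro i j hj
  funext v w
  cases i with
  | zero => rfl
  | succ i => simp [dLie, dLieS, hW i j hj]

theorem weilD_mem_homogeneous (hW : W ∈ homogeneous F g m) :
    weilD W ∈ homogeneous F g (m + 1) := by
  intro i j hij
  have dLie_eq_zero : dLie W i j = 0 := by
    cases i with
    | zero => rfl
    | succ i =>
      funext v w
      simp [dLie, dLieS, hW i j (by omega)]
  have dKos_eq_zero : dKos W i j = 0 := by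
    cases j with
    | zero => rfl
    | succ j =>
      funext v w
      simp [dKos, dKoszul, hW (i + 1) j (by omega)]
  rw [weilD_apply, Pi.add_apply, Pi.add_apply, dLie_eq_zero, dKos_eq_zero, add_zero]

variable [LieAlgebra F g] {h : LieSubalgebra F g} {p : End F g}

theorem weilD_koszulHomotopy_sub_der (cochain : W ∈ cochains F g) (closed : weilD W = 0) :
    weilD (koszulHomotopy p W) - der p W =
      dLie (koszulHomotopy p W) + koszulHomotopy p (dLie W) := by
  rw [weilD_apply, add_eq_zero_iff_eq_neg] at closed
  rw [← dKos_koszulHomotopy_add p cochain, closed, map_neg, weilD_apply]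
  abel

/-- The degree `m` part of the relative Weil algebra, i.e. `IsWElt` as a submodule. -/
def relativeWeil (h : LieSubalgebra F g) (m : ℕ) : Submodule F (WeilFamily F g) :=
  basic h ⊓ homogeneous F g m

/-- The cocycles of degree `m` of the relative Weil algebra restricting to zero in `(S h)^*`. -/
def vanishingCocycles (h : LieSubalgebra F g) (m : ℕ) : Submodule F (WeilFamily F g) :=
  relativeWeil h m ⊓ vanishingOn h.toSubmodule ⊓ LinearMap.ker weilD

theorem weilD_mem_vanishingCocycles (hW : W ∈ relativeWeil h m) :
    weilD W ∈ vanishingCocycles h (m + 1) :=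
  have horizontal := (mem_basic.mp hW.1).1
  ⟨⟨⟨weilD_mem_basic hW.1, weilD_mem_homogeneous hW.2⟩, weilD_mem_vanishingOn horizontal⟩,
    weilD_weilD (mem_horizontal.mp horizontal).1⟩

theorem koszulHomotopy_mem_relativeWeil (ker_p : LinearMap.ker p = h.toSubmodule)
    (p_lie : ∀ X ∈ h, ∀ x, p ⁅X, x⁆ = ⁅X, p x⁆) (hW : W ∈ relativeWeil h (m + 1)) :
    koszulHomotopy p W ∈ relativeWeil h m :=
  ⟨koszulHomotopy_mem_basic ker_p p_lie hW.1, koszulHomotopy_mem_homogeneous hW.2⟩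

theorem exists_weilD_koszulHomotopy_eq [CharZero F] (idem : IsIdempotentElem p)
    (ker_p : LinearMap.ker p = h.toSubmodule) (p_lie : ∀ X ∈ h, ∀ x, p ⁅X, x⁆ = ⁅X, p x⁆)
    (hW : W ∈ vanishingCocycles h (m + 1)) :
    ∃ z ∈ vanishingCocycles h (m + 1), weilD (koszulHomotopy p z) = W := by
  refine exists_apply_eq_of_filtration (A := weilD * koszulHomotopy p) (N := der p)
    (Z := vanishingCocycles h (m + 1)) (L := symDegreeLT F g) (f := weightPoly F (m + 1))
    (fun z hz ↦ weilD_mem_vanishingCocycles (koszulHomotopy_mem_relativeWeil ker_p p_lie hz.1.1))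
    (fun J z ↦ der_mem_symDegreeLT) symDegreeLT_mono symDegreeLT_zero (fun J z hz hzJ ↦ ?_)
    (eval_weightPoly_zero_ne_zero _) (fun z hz ↦ ?_) hW (homogeneous_le_symDegreeLT hW.1.1.2)
  · have horizontal := (mem_basic.mp hz.1.1.1).1
    rw [Module.End.mul_apply, weilD_koszulHomotopy_sub_der (mem_horizontal.mp horizontal).1 hz.2]
    exact add_mem (dLie_mem_symDegreeLT (koszulHomotopy_mem_symDegreeLT hzJ))
      (koszulHomotopy_mem_symDegreeLT (dLie_mem_symDegreeLT hzJ))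
  · obtain ⟨⟨⟨isBasic, degree⟩, vanishing⟩, -⟩ := hz
    have horizontal := (mem_basic.mp isBasic).1
    rw [← ker_p] at horizontal vanishing
    exact aeval_der_weightPoly idem horizontal degree vanishing

theorem projection_lie {V : Submodule F g} (hV : ∀ X ∈ h, ∀ v ∈ V, ⁅X, v⁆ ∈ V)
    (hcompl : IsCompl h.toSubmodule V) {X : g} (hX : X ∈ h) (x : g) :
    V.projection h.toSubmodule hcompl.symm ⁅X, x⁆ =
      ⁅X, V.projection h.toSubmodule hcompl.symm x⁆ := by
  obtain ⟨y, hy, z, hz, rfl⟩ := Submodule.mem_sup.mp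
    (hcompl.sup_eq_top ▸ Submodule.mem_top : x ∈ h.toSubmodule ⊔ V)
  have project_add (a b : g) (ha : a ∈ h) (hb : b ∈ V) :
      V.projection h.toSubmodule hcompl.symm (a + b) = b := by
    rw [map_add, (Submodule.projection_apply_eq_zero_iff hcompl.symm).mpr ha, zero_add]
    exact Submodule.projection_apply_of_mem_left hcompl.symm hb
  rw [lie_add, project_add _ _ (h.lie_mem hX hy) (hV X hX z hz), project_add y z hy hz]

theorem exists_weilD_eq_of_mem_vanishingCocycles [CharZero F] {V : Submodule F g}
    (hV : ∀ X ∈ h, ∀ v ∈ V, ⁅X, v⁆ ∈ V) (hcompl : IsCompl h.toSubmodule V)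
    (hW : W ∈ vanishingCocycles h (m + 1)) :
    ∃ W' ∈ relativeWeil h m, (∀ j, W' 0 j = 0) ∧ weilD W' = W := by
  have ker_p := Submodule.ker_projection hcompl.symm
  have p_lie (X) (hX : X ∈ h) := projection_lie hV hcompl hX
  obtain ⟨z, hz, rfl⟩ := exists_weilD_koszulHomotopy_eq
    (Submodule.isIdempotentElem_projection hcompl.symm) ker_p p_lie hW
  exact ⟨_, koszulHomotopy_mem_relativeWeil ker_p p_lie hz.1.1, koszulHomotopy_zero_left _ z, rfl⟩

end Exactness

section Cohomology

/-! ### Restriction to the subalgebra -/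

variable {g : Type*}

/-- The family concentrated in bidegree `(0, j)`, where it is the polynomial `Q` composed with `q`.
For `q` a projection onto a subalgebra this extends polynomials from the subalgebra to `g`. -/
def extend {j : ℕ} (Q : (Fin j → g) → F) (q : g → g) : WeilFamily F g :=
  Pi.single 0 (Pi.single j fun _ w ↦ Q (q ∘ w))

theorem extend_zero {j : ℕ} (Q : (Fin j → g) → F) (q : g → g) (v : Fin 0 → g) (w : Fin j → g) :
    extend Q q 0 j v w = Q (q ∘ w) := by
  simp [extend]

theorem extend_eq_zero {j : ℕ} (Q : (Fin j → g) → F) (q : g → g) {i j' : ℕ}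
    (hij : ¬(i = 0 ∧ j' = j)) : extend Q q i j' = 0 := by
  rcases eq_or_ne i 0 with rfl | hi
  · simp [extend, Pi.single_eq_of_ne fun hj ↦ hij ⟨rfl, hj⟩]
  · simp [extend, Pi.single_eq_of_ne hi]

section Linear

variable [AddCommGroup g] [Module F g] {P : Submodule F g} {m : ℕ} {W : WeilFamily F g}

theorem mem_vanishingOn_of_odd (hW : W ∈ homogeneous F g m) (hm : Odd m) :
    W ∈ vanishingOn P := by
  intro j v w _
  have degree_ne : 0 + 2 * j ≠ m := by
    obtain ⟨k, rfl⟩ := hm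
    omega
  rw [hW 0 j degree_ne]
  rfl

theorem mem_vanishingOn_iff_of_even {j : ℕ} (hW : W ∈ homogeneous F g (2 * j)) :
    W ∈ vanishingOn P ↔ ∀ w : Fin j → g, (∀ r, w r ∈ P) → W 0 j Fin.elim0 w = 0 := by
  refine ⟨fun vanishing ↦ vanishing j _, fun vanishing j' v w hw ↦ ?_⟩
  rcases eq_or_ne j' j with rfl | hj
  · rw [Subsingleton.elim v Fin.elim0]
    exact vanishing w hw
  · rw [hW 0 j' (by omega)]
    rfl

theorem eq_zero_of_mem_homogeneous_zero (degree : W ∈ homogeneous F g 0)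
    (vanishing : W ∈ vanishingOn P) : W = 0 := by
  funext i j v w
  by_cases hij : i + 2 * j = 0
  · obtain ⟨rfl, rfl⟩ : i = 0 ∧ j = 0 := by omega
    exact vanishing 0 v w (fun r ↦ r.elim0)
  · rw [degree i j hij]
    rfl

end Linear

variable [LieRing g] [LieAlgebra F g] {h : LieSubalgebra F g} {m : ℕ} {W : WeilFamily F g}

theorem mem_relativeWeil_iff_isWElt : W ∈ relativeWeil h m ↔ IsWElt F g h m W :=
  and_congr_left' mem_basic_iff_isWCochain

theorem mem_vanishingOn_of_isWCobd (hW : IsWCobd F g h m W) : W ∈ vanishingOn h.toSubmodule := by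
  cases m with
  | zero =>
    rw [show W = 0 from funext₂ hW]
    exact zero_mem _
  | succ m =>
    obtain ⟨W', hW', rfl⟩ := hW
    rw [← weilD_eq_dWeil]
    exact (weilD_mem_vanishingCocycles (mem_relativeWeil_iff_isWElt.mpr hW')).1.2

theorem isWCobd_of_mem_vanishingCocycles [CharZero F] {V : Submodule F g}
    (hV : ∀ X ∈ h, ∀ v ∈ V, ⁅X, v⁆ ∈ V) (hcompl : IsCompl h.toSubmodule V)
    (hW : W ∈ vanishingCocycles h m) : IsWCobd F g h m W := by
  cases m with
  | zero =>
    rw [eq_zero_of_mem_homogeneous_zero hW.1.1.2 hW.1.2]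
    exact fun _ _ ↦ rfl
  | succ m =>
    obtain ⟨W', hW', -, rfl⟩ := exists_weilD_eq_of_mem_vanishingCocycles hV hcompl hW
    exact ⟨W', mem_relativeWeil_iff_isWElt.mp hW', (weilD_eq_dWeil W').symm⟩

theorem extend_mem_relativeWeil {j : ℕ} {Q : (Fin j → g) → F} (hQ : IsSymPoly F g h j Q)
    {q : End F g} (q_mem : ∀ x, q x ∈ h) (q_lie : ∀ X ∈ h, ∀ x, q ⁅X, x⁆ = ⁅X, q x⁆) :
    extend Q q ∈ relativeWeil h (2 * j) := by
  obtain ⟨add, smul, symmetric, invariant⟩ := hQ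
  refine mem_relativeWeil_iff_isWElt.mpr ⟨fun i j' ↦ ?_, fun i j' hij ↦
    extend_eq_zero Q q (by omega)⟩
  by_cases hij : i = 0 ∧ j' = j
  · obtain ⟨rfl, rfl⟩ := hij
    refine ⟨fun _ t ↦ t.elim0, fun _ t ↦ t.elim0, fun _ t ↦ t.elim0, fun v w r x y ↦ ?_,
      fun v w r c x ↦ ?_, fun v w σ ↦ ?_, fun _ t ↦ t.elim0, fun X hX v w ↦ ?_⟩
    · simp only [extend_zero, Function.comp_update, map_add, add]
    · simp only [extend_zero, Function.comp_update, map_smul, smul]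
    · simpa only [extend_zero, Function.comp_assoc] using symmetric (q ∘ w) σ
    · simpa [extend_zero, Function.comp_update, q_lie X hX] using
        invariant X hX (q ∘ w) fun r ↦ q_mem (w r)
  · rw [extend_eq_zero Q q hij]
    exact mem_basic_iff_isWCochain.mp (zero_mem _) i j'

theorem exists_cocycle_restricting_to [CharZero F] {V : Submodule F g}
    (hV : ∀ X ∈ h, ∀ v ∈ V, ⁅X, v⁆ ∈ V) (hcompl : IsCompl h.toSubmodule V) {j : ℕ}
    {Q : (Fin j → g) → F} (hQ : IsSymPoly F g h j Q) :
    ∃ W ∈ relativeWeil h (2 * j), weilD W = 0 ∧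
      ∀ w : Fin j → g, (∀ r, w r ∈ h) → W 0 j Fin.elim0 w = Q w := by
  set q : End F g := h.toSubmodule.projection V hcompl
  have q_lie (X) (hX : X ∈ h) (x) : q ⁅X, x⁆ = ⁅X, q x⁆ := by
    simp [q, Submodule.projection_eq_self_sub_projection hcompl.symm, projection_lie hV hcompl hX]
  have mem := extend_mem_relativeWeil hQ (Submodule.projection_apply_mem hcompl) q_lie
  obtain ⟨W, hW, W_zero, weilD_W⟩ := exists_weilD_eq_of_mem_vanishingCocycles hV hcompl
    (weilD_mem_vanishingCocycles mem)
  refine ⟨extend Q q - W, sub_mem mem hW, by rw [map_sub, weilD_W, sub_self], fun w hw ↦ ?_⟩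
  have q_comp : q ∘ w = w := funext fun r ↦ Submodule.projection_apply_of_mem_left hcompl (hw r)
  rw [Pi.sub_apply, Pi.sub_apply, W_zero, sub_zero, extend_zero, q_comp]

end Cohomology

end WeilFamily

open WeilFamily in
theorem weil_algebra_cohomology_general (F : Type*) [Field F] [CharZero F]
    (g : Type*) [LieRing g] [LieAlgebra F g]
    (h : LieSubalgebra F g)
    (V : Submodule F g) (hV : ∀ X ∈ h, ∀ v ∈ V, ⁅X, v⁆ ∈ V)
    (hcompl : IsCompl h.toSubmodule V) :
    (∀ m : ℕ, Odd (m + 1) → ∀ W, IsWElt F g h (m + 1) W → (∀ i j, dWeil F g W i j = 0) →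
      ∃ W', IsWElt F g h m W' ∧ dWeil F g W' = W) ∧
    (∀ j : ℕ,
      (∀ W, IsWElt F g h (2 * j) W → IsWCobd F g h (2 * j) W →
        ∀ w : Fin j → g, (∀ r, w r ∈ h) → W 0 j Fin.elim0 w = 0) ∧
      (∀ W, IsWElt F g h (2 * j) W → (∀ i j', dWeil F g W i j' = 0) →
        (∀ w : Fin j → g, (∀ r, w r ∈ h) → W 0 j Fin.elim0 w = 0) →
        IsWCobd F g h (2 * j) W) ∧
      (∀ Q : (Fin j → g) → F, IsSymPoly F g h j Q →
        ∃ W, IsWElt F g h (2 * j) W ∧ (∀ i j', dWeil F g W i j' = 0) ∧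
          ∀ w : Fin j → g, (∀ r, w r ∈ h) → W 0 j Fin.elim0 w = Q w)) := by
  have closed {W : WeilFamily F g} (hd : ∀ i j, dWeil F g W i j = 0) : weilD W = 0 :=
    (weilD_eq_dWeil W).trans (funext₂ hd)
  have isWCobd {m : ℕ} {W : WeilFamily F g} (hW : IsWElt F g h m W)
      (hd : ∀ i j, dWeil F g W i j = 0) (vanishing : W ∈ vanishingOn h.toSubmodule) :
      IsWCobd F g h m W :=
    isWCobd_of_mem_vanishingCocycles hV hcompl
      ⟨⟨mem_relativeWeil_iff_isWElt.mpr hW, vanishing⟩, closed hd⟩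
  refine ⟨fun m odd W hW hd ↦ isWCobd hW hd (mem_vanishingOn_of_odd hW.2 odd),
    fun j ↦ ⟨fun W hW cobd ↦ ?_, fun W hW hd restrict ↦ ?_, fun Q hQ ↦ ?_⟩⟩
  · exact (mem_vanishingOn_iff_of_even hW.2).mp (mem_vanishingOn_of_isWCobd cobd)
  · exact isWCobd hW hd ((mem_vanishingOn_iff_of_even hW.2).mpr restrict)
  · obtain ⟨W, hW, weilD_W, restrict⟩ := exists_cocycle_restricting_to hV hcompl hQ
    rw [weilD_eq_dWeil] at weilD_W
    exact ⟨W, mem_relativeWeil_iff_isWElt.mp hW, congrFun₂ weilD_W, restrict⟩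

/-- let `g` be a Lie algebra over a field of characteristic zero and
`h ⊂ g` a finite-dimensional subalgebra with an `ad(h)`-invariant complement. Then
`H^m(W(g,h)) = 0` for odd `m`, and for every `j ≥ 0` the restriction
`W^{0,j}(g,h) = (S^j g)^{*h} → (S^j h)^{*h}` induces an isomorphism
`H^{2j}(W(g,h)) ≅ (S^j h)^{*h}`. -/
theorem weil_algebra_cohomology (F : Type*) [Field F] [CharZero F]
    (g : Type*) [LieRing g] [LieAlgebra F g]
    (h : LieSubalgebra F g) [FiniteDimensional F h]
    (V : Submodule F g) (hV : ∀ X ∈ h, ∀ v ∈ V, ⁅X, v⁆ ∈ V)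
    (hcompl : IsCompl h.toSubmodule V) :
    -- odd-degree cohomology vanishes:
    (∀ m : ℕ, Odd (m+1) → ∀ W, IsWElt F g h (m+1) W → (∀ i j, dWeil F g W i j = 0) →
      ∃ W', IsWElt F g h m W' ∧ dWeil F g W' = W) ∧
    -- in even degrees `2j`, `W ↦ (W 0 j)|_{h-tuples}` induces an isomorphism
    -- `H^{2j}(W(g,h)) ≅ (S^j h)^{*h}`:
    (∀ j : ℕ,
      (∀ W, IsWElt F g h (2*j) W → IsWCobd F g h (2*j) W →
        ∀ w : Fin j → g, (∀ r, w r ∈ h) → W 0 j Fin.elim0 w = 0) ∧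
      (∀ W, IsWElt F g h (2*j) W → (∀ i j', dWeil F g W i j' = 0) →
        (∀ w : Fin j → g, (∀ r, w r ∈ h) → W 0 j Fin.elim0 w = 0) →
        IsWCobd F g h (2*j) W) ∧
      (∀ Q : (Fin j → g) → F, IsSymPoly F g h j Q →
        ∃ W, IsWElt F g h (2*j) W ∧ (∀ i j', dWeil F g W i j' = 0) ∧
          ∀ w : Fin j → g, (∀ r, w r ∈ h) → W 0 j Fin.elim0 w = Q w)) :=
  weil_algebra_cohomology_general F g h V hV hcompl

end
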